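/- arXiv:2303.03567 — 2 statements merged into one kernel-verified Lean document; each statement's English description precedes it below -/
import Mathlib

section
/- Let d ≥ 2. For every choice of constants c ∈ (0, (d−1)/4), T_0 ≥ 1 and M ≥ 4 there exists δ_M > 0, depending only on these quantities, with the following property. Suppose μ is a probability measure supported on a set E ⊆ [0,1]^d whose partial L²-Fourier integral satisfies F_μ(T_1 T_2) ≤ T_1^c · F_μ(T_2) for all T_1, T_2 ≥ T_0. If there exist δ ∈ (0, δ_M) and a finite sequence R_1, …, R_J ∈ (T_0, ∞) satisfying R_{j+1} ≥ δ^{−2} R_j for all 1 ≤ j < J and Σ_{j=1}^J F_μ(R_j) > (1 − 2/M)·F_μ(δ^{−2} R_J), then at least one of the numbers δ R_j^{−1}, 1 ≤ j ≤ J, lies in the distance set Δ(E). -/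
open MeasureTheory Set Metric Filter
open scoped ENNReal NNReal Topology

noncomputable section

abbrev Euc (d : ℕ) : Type := EuclideanSpace ℝ (Fin d)

/-- The closed unit cube `[0,1]^d`. -/
def unitCube (d : ℕ) : Set (Euc d) := {x | ∀ i, x i ∈ Icc (0:ℝ) 1}

/-- The distance set `Δ(E,F) = {|x-y| : x ∈ E, y ∈ F}`. -/
def distSet {d : ℕ} (E F : Set (Euc d)) : Set ℝ :=
  {t | ∃ x ∈ E, ∃ y ∈ F, dist x y = t}

/-- `Q` is a dyadic cube of side length `l`, i.e. `Q = 2^{-k}(m + [0,1]^d)`. -/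
def IsDyadicCube {d : ℕ} (Q : Set (Euc d)) (l : ℝ) : Prop :=
  ∃ (k : ℤ) (m : Fin d → ℤ), l = (2:ℝ) ^ (-k) ∧
    Q = {x | ∀ i, (m i : ℝ) * (2:ℝ) ^ (-k) ≤ x i ∧ x i ≤ ((m i : ℝ) + 1) * (2:ℝ) ^ (-k)}

/-- The `s`-dimensional dyadic Hausdorff content: the infimum of `∑ ℓ(Q_i)^s` over
countable covers of `E` by dyadic cubes. -/
def dyadicContent {d : ℕ} (s : ℝ) (E : Set (Euc d)) : ℝ≥0∞ :=
  ⨅ (Q : ℕ → Set (Euc d)) (l : ℕ → ℝ) (_ : ∀ i, IsDyadicCube (Q i) (l i))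
    (_ : E ⊆ ⋃ i, Q i), ∑' i, ENNReal.ofReal (l i ^ s)

/-- The Fourier transform `μ̂(ξ) = ∫ e^{-i x·ξ} dμ(x)` of a finite Borel measure. -/
def fourierM {d : ℕ} (μ : Measure (Euc d)) (ξ : Euc d) : ℂ :=
  ∫ x, Complex.exp (-(Complex.I * ((inner ℝ x ξ : ℝ) : ℂ))) ∂μ

/-- The partial `L²`-Fourier integral `F_μ(T) = ∫_{|ξ| ≤ T} |μ̂(ξ)|² dξ`. -/
def FmuInt {d : ℕ} (μ : Measure (Euc d)) (T : ℝ) : ℝ :=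
  ∫ ξ in {ξ : Euc d | ‖ξ‖ ≤ T}, ‖fourierM μ ξ‖ ^ 2

/-!
Let `σ` be the uniform probability measure on the unit sphere. If `r` is not a distance of `E`, the
convolution of the autocorrelation of `μ` with the sphere of radius `r` puts no mass near the
origin (after exhausting `E` by compact sets), so `∫ |μ̂(ξ)|² σ̂(rξ) dξ ≤ 0`. Take `r = δ / R`.
On `‖ξ‖ ≤ R` the kernel `σ̂(rξ)` is at least `1 - δ² / 2`; everywhere it is at least `-b` for some
`b < 1 / 2`; and beyond `δ⁻² R` its decay `(r‖ξ‖) ^ (-(d - 1) / 2)` beats the growth of `F_μ`, as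
`c < (d - 1) / 4`. Hence `2 F_μ(R) ≤ F_μ(δ⁻² R) - F_μ(R)` for small `δ`. If this held at every
`R_j`, the right-hand sides would telescope to at most `F_μ(δ⁻² R_J)`, since `R_{j+1} ≥ δ⁻² R_j`.

The decay of `σ̂` follows from Bessel's equation for its radial profile. Averaging
`|1 + e^{iα} + e^{iβ}|² ≥ 0` over equilateral triangles `0, ξ, η` gives `σ̂ ≥ -1 / 2`, and equality
at `ξ` would propagate to `2ξ, 4ξ, …`, contradicting the decay; hence `b < 1 / 2`. Passing from
compact subsets to `E` uses Fatou's lemma, with domination by a mixture of Gaussians.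
-/

section UniformSphere

variable (V : Type*) [NormedAddCommGroup V] [InnerProductSpace ℝ V] [FiniteDimensional ℝ V]
  [MeasurableSpace V] [BorelSpace V]

/-- The rotation-invariant probability measure on the unit sphere, regarded as a measure on the
ambient space: the law of `x / ‖x‖` for `x` uniformly distributed in the unit ball. -/
def uniformSphere : Measure V :=
  (ProbabilityTheory.cond volume (ball (0 : V) 1)).map NormedSpace.normalize

lemma measurable_normalize : Measurable (NormedSpace.normalize : V → V) :=
  measurable_norm.inv.smul measurable_id

instance isProbabilityMeasure_uniformSphere : IsProbabilityMeasure (uniformSphere V) :=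
  have := ProbabilityTheory.cond_isProbabilityMeasure_of_finite
    (measure_ball_pos volume (0 : V) one_pos).ne' measure_ball_lt_top.ne
  Measure.isProbabilityMeasure_map (measurable_normalize V).aemeasurable

lemma ae_norm_eq_one_uniformSphere [Nontrivial V] : ∀ᵐ ω ∂uniformSphere V, ‖ω‖ = 1 := by
  refine (ae_map_iff (measurable_normalize V).aemeasurable
    (measurableSet_eq_fun measurable_norm measurable_const)).2 ?_
  have ne_zero : ∀ᵐ x ∂(volume : Measure V), x ≠ 0 := by simp [ae_iff]
  filter_upwards [ProbabilityTheory.cond_absolutelyContinuous.ae_le ne_zero] with x hx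
  exact NormedSpace.norm_normalize_eq_one_iff.2 hx

variable {V}

lemma measurePreserving_uniformSphere (L : V ≃ₗᵢ[ℝ] V) :
    MeasurePreserving L (uniformSphere V) (uniformSphere V) := by
  have preimage_ball : L ⁻¹' ball (0 : V) 1 = ball 0 1 := by simp
  have map_cond : (ProbabilityTheory.cond volume (ball (0 : V) 1)).map L =
      ProbabilityTheory.cond volume (ball 0 1) := by
    have := (L.measurePreserving.restrict_preimage (s := ball (0 : V) 1) measurableSet_ball).map_eq
    rw [preimage_ball] at this
    rw [ProbabilityTheory.cond, Measure.map_smul, this]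
  have normalize_comm : L ∘ NormedSpace.normalize = NormedSpace.normalize ∘ L := by
    ext1 x
    simp [NormedSpace.normalize]
  refine ⟨L.continuous.measurable, ?_⟩
  rw [uniformSphere, Measure.map_map L.continuous.measurable (measurable_normalize V),
    normalize_comm, ← Measure.map_map (measurable_normalize V) L.continuous.measurable, map_cond]

lemma integral_comp_uniformSphere (L : V ≃ₗᵢ[ℝ] V) (g : V → ℝ) :
    ∫ ω, g (L ω) ∂uniformSphere V = ∫ ω, g ω ∂uniformSphere V :=
  (measurePreserving_uniformSphere L).integral_comp L.toHomeomorph.measurableEmbedding g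

end UniformSphere

section TrigonometricMoments

lemma hasDerivAt_integral_of_norm_deriv_le {α E : Type*} [MeasurableSpace α]
    [NormedAddCommGroup E] [NormedSpace ℝ E] {ν : Measure α} [IsFiniteMeasure ν]
    {F F' : ℝ → α → E} {B t : ℝ} (hF : ∀ s, Integrable (F s) ν)
    (hF' : AEStronglyMeasurable (F' t) ν) (hB : ∀ᵐ x ∂ν, ∀ s, ‖F' s x‖ ≤ B)
    (hderiv : ∀ x s, HasDerivAt (F · x) (F' s x) s) :
    HasDerivAt (fun s => ∫ x, F s x ∂ν) (∫ x, F' t x ∂ν) t :=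
  (hasDerivAt_integral_of_dominated_loc_of_deriv_le (s := univ) (bound := fun _ => B) univ_mem
    (.of_forall fun s => (hF s).aestronglyMeasurable) (hF t) hF'
    (hB.mono fun _ hx s _ => hx s) (integrable_const _)
    (.of_forall fun x s _ => hderiv x s)).2

variable {V : Type*} [NormedAddCommGroup V] [InnerProductSpace ℝ V]

lemma abs_inner_mul_le {ω : V} (hω : ‖ω‖ ≤ 1) (η : V) {x : ℝ} (hx : |x| ≤ 1) :
    |inner ℝ ω η * x| ≤ ‖η‖ := by
  calc |inner ℝ ω η * x| ≤ |inner ℝ ω η| * 1 := by rw [abs_mul]; gcongr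
    _ ≤ 1 * ‖η‖ := by
        rw [mul_one]
        exact (abs_real_inner_le_norm ω η).trans (by gcongr)
    _ = ‖η‖ := one_mul _

lemma abs_inner_mul_inner_mul_le {ω : V} (hω : ‖ω‖ ≤ 1) (η ζ : V) {x : ℝ} (hx : |x| ≤ 1) :
    |inner ℝ ω η * inner ℝ ω ζ * x| ≤ ‖η‖ * ‖ζ‖ := by
  calc |inner ℝ ω η * inner ℝ ω ζ * x| = |inner ℝ ω η * 1| * |inner ℝ ω ζ * x| := by
        rw [← abs_mul]; ring_nf
    _ ≤ ‖η‖ * ‖ζ‖ := mul_le_mul (abs_inner_mul_le hω η (by simp)) (abs_inner_mul_le hω ζ hx)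
        (abs_nonneg _) (norm_nonneg _)

lemma hasDerivAt_inner_add_smul (ω ξ η : V) (t : ℝ) :
    HasDerivAt (fun t : ℝ => (inner ℝ ω (ξ + t • η) : ℝ)) (inner ℝ ω η) t := by
  simpa [inner_add_right, inner_smul_right] using
    ((hasDerivAt_id t).mul_const (inner ℝ ω η)).const_add (inner ℝ ω ξ)

variable [MeasurableSpace V]

/-- The cosine transform of a measure, that is, the real part of its Fourier transform. -/
def cosTransform (ν : Measure V) (ξ : V) : ℝ := ∫ ω, Real.cos (inner ℝ ω ξ) ∂ν

/-- The first trigonometric moment of a measure; `-sinMoment ν η` is the derivative of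
`cosTransform ν` in the direction `η`. -/
def sinMoment (ν : Measure V) (η ξ : V) : ℝ := ∫ ω, inner ℝ ω η * Real.sin (inner ℝ ω ξ) ∂ν

/-- The second trigonometric moment of a measure; `-cosMoment ν η ζ` is the second derivative of
`cosTransform ν` in the directions `η` and `ζ`. -/
def cosMoment (ν : Measure V) (η ζ ξ : V) : ℝ :=
  ∫ ω, inner ℝ ω η * inner ℝ ω ζ * Real.cos (inner ℝ ω ξ) ∂ν

lemma abs_cosTransform_le_one (ν : Measure V) [IsProbabilityMeasure ν] (ξ : V) :
    |cosTransform ν ξ| ≤ 1 := by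
  have norm_cos_le : ∀ᵐ ω ∂ν, ‖Real.cos (inner ℝ ω ξ)‖ ≤ 1 :=
    .of_forall fun _ => Real.abs_cos_le_one _
  simpa [cosTransform] using norm_integral_le_of_norm_le_const norm_cos_le

variable [BorelSpace V] [SecondCountableTopology V] {ν : Measure V} [IsFiniteMeasure ν]

lemma integrable_cos_inner (ν : Measure V) [IsFiniteMeasure ν] (ξ : V) :
    Integrable (fun ω => Real.cos (inner ℝ ω ξ)) ν :=
  .of_bound (C := 1) (by fun_prop) (.of_forall fun _ => Real.abs_cos_le_one _)

lemma continuous_cosTransform (ν : Measure V) [IsFiniteMeasure ν] :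
    Continuous (cosTransform ν) :=
  continuous_of_dominated (bound := fun _ => 1) (fun _ => by fun_prop)
    (fun _ => .of_forall fun _ => Real.abs_cos_le_one _) (integrable_const _)
    (.of_forall fun _ => by fun_prop)

lemma integrable_inner_mul_sin (hν : ∀ᵐ ω ∂ν, ‖ω‖ ≤ 1) (η ξ : V) :
    Integrable (fun ω => inner ℝ ω η * Real.sin (inner ℝ ω ξ)) ν :=
  .of_bound (by fun_prop) ‖η‖ (hν.mono fun _ hω => abs_inner_mul_le hω η (Real.abs_sin_le_one _))

lemma integrable_inner_mul_inner_mul_cos (hν : ∀ᵐ ω ∂ν, ‖ω‖ ≤ 1) (η ζ ξ : V) :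
    Integrable (fun ω => inner ℝ ω η * inner ℝ ω ζ * Real.cos (inner ℝ ω ξ)) ν :=
  .of_bound (by fun_prop) (‖η‖ * ‖ζ‖)
    (hν.mono fun _ hω => abs_inner_mul_inner_mul_le hω η ζ (Real.abs_cos_le_one _))

lemma hasDerivAt_cosTransform (hν : ∀ᵐ ω ∂ν, ‖ω‖ ≤ 1) (ξ η : V) (t : ℝ) :
    HasDerivAt (fun t : ℝ => cosTransform ν (ξ + t • η)) (-sinMoment ν η (ξ + t • η)) t := by
  rw [sinMoment, ← integral_neg]
  refine hasDerivAt_integral_of_norm_deriv_le (B := ‖η‖)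
    (F' := fun t ω => -(inner ℝ ω η * Real.sin (inner ℝ ω (ξ + t • η))))
    (fun _ => integrable_cos_inner ν _) (integrable_inner_mul_sin hν η _).neg.aestronglyMeasurable
    ?_ fun ω t => ?_
  · filter_upwards [hν] with ω hω t
    simpa using abs_inner_mul_le hω η (Real.abs_sin_le_one _)
  · exact (hasDerivAt_inner_add_smul ω ξ η t).cos.congr_deriv (by ring)

lemma hasDerivAt_sinMoment (hν : ∀ᵐ ω ∂ν, ‖ω‖ ≤ 1) (ζ ξ η : V) (t : ℝ) :
    HasDerivAt (fun t : ℝ => sinMoment ν ζ (ξ + t • η)) (cosMoment ν ζ η (ξ + t • η)) t := by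
  refine hasDerivAt_integral_of_norm_deriv_le (B := ‖ζ‖ * ‖η‖)
    (F' := fun t ω => inner ℝ ω ζ * inner ℝ ω η * Real.cos (inner ℝ ω (ξ + t • η)))
    (fun _ => integrable_inner_mul_sin hν ζ _)
    (integrable_inner_mul_inner_mul_cos hν ζ η _).aestronglyMeasurable ?_ fun ω t => ?_
  · filter_upwards [hν] with ω hω t
    exact abs_inner_mul_inner_mul_le hω ζ η (Real.abs_cos_le_one _)
  · exact ((hasDerivAt_inner_add_smul ω ξ η t).sin.const_mul _).congr_deriv (by ring)

lemma one_sub_sq_norm_div_two_le_cosTransform {ν : Measure V} [IsProbabilityMeasure ν]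
    (hν : ∀ᵐ ω ∂ν, ‖ω‖ ≤ 1) (ξ : V) : 1 - ‖ξ‖ ^ 2 / 2 ≤ cosTransform ν ξ := by
  have le_cos : ∀ᵐ ω ∂ν, 1 - ‖ξ‖ ^ 2 / 2 ≤ Real.cos (inner ℝ ω ξ) := by
    filter_upwards [hν] with ω hω
    have sq_inner_le : inner ℝ ω ξ ^ 2 ≤ ‖ξ‖ ^ 2 :=
      sq_le_sq.2 (by simpa using abs_inner_mul_le hω ξ (x := 1) (by simp))
    linarith [Real.one_sub_sq_div_two_le_cos (x := inner ℝ ω ξ)]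
  simpa [cosTransform] using integral_mono_ae (integrable_const _) (integrable_cos_inner ν ξ) le_cos

end TrigonometricMoments

section SphericalTransform

variable {V : Type*} [NormedAddCommGroup V] [InnerProductSpace ℝ V] [FiniteDimensional ℝ V]
  [MeasurableSpace V] [BorelSpace V]

lemma cosTransform_uniformSphere_map (L : V ≃ₗᵢ[ℝ] V) (ξ : V) :
    cosTransform (uniformSphere V) (L ξ) = cosTransform (uniformSphere V) ξ := by
  simp only [cosTransform, ← integral_comp_uniformSphere L (fun ω => Real.cos (inner ℝ ω (L ξ))),
    L.inner_map_map]

lemma sinMoment_uniformSphere_map (L : V ≃ₗᵢ[ℝ] V) (η ξ : V) :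
    sinMoment (uniformSphere V) (L η) (L ξ) = sinMoment (uniformSphere V) η ξ := by
  simp only [sinMoment, ← integral_comp_uniformSphere L
    (fun ω => inner ℝ ω (L η) * Real.sin (inner ℝ ω (L ξ))), L.inner_map_map]

lemma cosTransform_uniformSphere_eq_of_norm_eq {ξ η : V} (h : ‖ξ‖ = ‖η‖) :
    cosTransform (uniformSphere V) ξ = cosTransform (uniformSphere V) η := by
  rw [← cosTransform_uniformSphere_map (ℝ ∙ (ξ - η))ᗮ.reflection ξ, Submodule.reflection_sub h]

lemma sinMoment_uniformSphere_eq_zero {η ξ : V} (h : inner ℝ η ξ = 0) :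
    sinMoment (uniformSphere V) η ξ = 0 := by
  have := sinMoment_uniformSphere_map (ℝ ∙ η)ᗮ.reflection η ξ
  rw [Submodule.reflection_orthogonalComplement_singleton_eq_neg,
    Submodule.reflection_mem_subspace_eq_self
      (Submodule.mem_orthogonal_singleton_iff_inner_right.2 h)] at this
  have sinMoment_neg : sinMoment (uniformSphere V) (-η) ξ = -sinMoment (uniformSphere V) η ξ := by
    simp [sinMoment, integral_neg]
  linarith

/-- The profile `s ↦ σ̂(s e)` of the Fourier transform of the uniform measure `σ` on the sphere;
it does not depend on the unit vector `e`. -/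
def sphericalProfile (e : V) (s : ℝ) : ℝ := cosTransform (uniformSphere V) (s • e)

variable [Nontrivial V]

lemma ae_norm_le_one_uniformSphere : ∀ᵐ ω ∂uniformSphere V, ‖ω‖ ≤ 1 :=
  (ae_norm_eq_one_uniformSphere V).mono fun _ h => h.le

-- Differentiate at `t = 0` the identity `sinMoment σ (s f - t e) (s e + t f) = 0`.
lemma mul_cosMoment_uniformSphere {e f : V} (he : ‖e‖ = 1) (hf : ‖f‖ = 1) (hef : inner ℝ e f = 0)
    (s : ℝ) :
    s * cosMoment (uniformSphere V) f f (s • e) = sinMoment (uniformSphere V) e (s • e) := by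
  set σ := uniformSphere V
  have hσ : ∀ᵐ ω ∂σ, ‖ω‖ ≤ 1 := ae_norm_le_one_uniformSphere
  have tangential (t : ℝ) :
      s * sinMoment σ f (s • e + t • f) - t * sinMoment σ e (s • e + t • f) = 0 := by
    have orthogonal : inner ℝ (s • f - t • e) (s • e + t • f) = 0 := by
      simp only [inner_sub_left, inner_add_right, inner_smul_left, inner_smul_right, hef,
        real_inner_comm e f, real_inner_self_eq_norm_sq, he, hf, RCLike.conj_to_real]
      ring
    rw [← sinMoment_uniformSphere_eq_zero orthogonal, sinMoment, sinMoment, sinMoment,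
      ← integral_const_mul, ← integral_const_mul,
      ← integral_sub ((integrable_inner_mul_sin hσ _ _).const_mul _)
        ((integrable_inner_mul_sin hσ _ _).const_mul _)]
    simp only [inner_sub_right, inner_smul_right, sub_mul, mul_assoc]
    rfl
  have deriv_left := ((hasDerivAt_sinMoment hσ f (s • e) f 0).const_mul s).sub
    ((hasDerivAt_id (0 : ℝ)).mul (hasDerivAt_sinMoment hσ e (s • e) f 0))
  have deriv_zero := deriv_left.unique
    ((hasDerivAt_const (0 : ℝ) (0 : ℝ)).congr_of_eventuallyEq (.of_forall tangential))
  simp only [zero_smul, add_zero, id, one_mul, zero_mul] at deriv_zero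
  linarith

lemma sum_cosMoment_uniformSphere {ι : Type*} [Fintype ι] (b : OrthonormalBasis ι ℝ V) (ξ : V) :
    ∑ i, cosMoment (uniformSphere V) (b i) (b i) ξ = cosTransform (uniformSphere V) ξ := by
  simp only [cosMoment, cosTransform]
  rw [← integral_finsetSum _ fun i _ =>
    integrable_inner_mul_inner_mul_cos ae_norm_le_one_uniformSphere _ _ _]
  refine integral_congr_ae ?_
  filter_upwards [ae_norm_eq_one_uniformSphere V] with ω hω
  simp only [← Finset.sum_mul, ← sq, b.sum_sq_inner_left, hω, one_pow, one_mul]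

lemma hasDerivAt_sphericalProfile (e : V) (s : ℝ) :
    HasDerivAt (sphericalProfile e) (-sinMoment (uniformSphere V) e (s • e)) s := by
  simpa only [zero_add, sphericalProfile] using!
    hasDerivAt_cosTransform ae_norm_le_one_uniformSphere 0 e s

lemma hasDerivAt_deriv_sphericalProfile (e : V) (s : ℝ) :
    HasDerivAt (fun s : ℝ => -sinMoment (uniformSphere V) e (s • e))
      (-cosMoment (uniformSphere V) e e (s • e)) s := by
  simpa only [zero_add] using! (hasDerivAt_sinMoment ae_norm_le_one_uniformSphere e 0 e s).neg

lemma sphericalProfile_ode {ι : Type*} [Fintype ι] (b : OrthonormalBasis ι ℝ V) (i : ι) (s : ℝ) :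
    s * (sphericalProfile (b i) s - cosMoment (uniformSphere V) (b i) (b i) (s • b i)) =
      (Module.finrank ℝ V - 1) * sinMoment (uniformSphere V) (b i) (s • b i) := by
  classical
  have transverse (j : ι) (hj : j ∈ Finset.univ.erase i) :
      s * cosMoment (uniformSphere V) (b j) (b j) (s • b i) =
        sinMoment (uniformSphere V) (b i) (s • b i) :=
    mul_cosMoment_uniformSphere (b.norm_eq_one i) (b.norm_eq_one j)
      (b.inner_eq_zero (Finset.ne_of_mem_erase hj).symm) s
  rw [sphericalProfile, ← sum_cosMoment_uniformSphere b,
    ← Finset.add_sum_erase _ _ (Finset.mem_univ i), add_sub_cancel_left, Finset.mul_sum,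
    Finset.sum_congr rfl transverse, Finset.sum_const, Finset.card_erase_of_mem (Finset.mem_univ i),
    Finset.card_univ, ← Module.finrank_eq_card_basis b.toBasis, nsmul_eq_mul,
    Nat.cast_sub Module.finrank_pos, Nat.cast_one]

end SphericalTransform

section DecayOfODESolutions

lemma hasDerivAt_energy {v v' : ℝ → ℝ} {κ s : ℝ} (hv : HasDerivAt v (v' s) s)
    (hv' : HasDerivAt v' ((κ / s ^ 2 - 1) * v s) s) :
    HasDerivAt (fun s => v s ^ 2 + v' s ^ 2) (2 * κ / s ^ 2 * (v s * v' s)) s :=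
  ((hv.pow 2).add (hv'.pow 2)).congr_deriv (by push_cast; ring)

-- Grönwall: the logarithmic derivative of the energy is at most `|κ| / s²`.
lemma antitoneOn_energy_mul_exp {v v' : ℝ → ℝ} {κ : ℝ}
    (hv : ∀ s, 0 < s → HasDerivAt v (v' s) s)
    (hv' : ∀ s, 0 < s → HasDerivAt v' ((κ / s ^ 2 - 1) * v s) s) :
    AntitoneOn (fun s => (v s ^ 2 + v' s ^ 2) * Real.exp (|κ| / s)) (Ioi 0) := by
  have deriv (s : ℝ) (hs : 0 < s) :
      HasDerivAt (fun s => (v s ^ 2 + v' s ^ 2) * Real.exp (|κ| / s))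
        ((2 * κ * (v s * v' s) - |κ| * (v s ^ 2 + v' s ^ 2)) / s ^ 2 * Real.exp (|κ| / s)) s := by
    have deriv_exp := ((hasDerivAt_inv hs.ne').const_mul |κ|).exp
    refine ((hasDerivAt_energy (hv s hs) (hv' s hs)).mul deriv_exp).congr_deriv ?_
    simp only [div_eq_mul_inv]
    ring
  have cross_term_le (s : ℝ) : 2 * κ * (v s * v' s) ≤ |κ| * (v s ^ 2 + v' s ^ 2) := by
    calc 2 * κ * (v s * v' s) = κ * (2 * v s * v' s) := by ring
      _ ≤ |κ| * |2 * v s * v' s| := by rw [← abs_mul]; exact le_abs_self _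
      _ ≤ |κ| * (v s ^ 2 + v' s ^ 2) := by
          gcongr
          exact abs_le.2 ⟨by linarith [two_mul_le_add_sq (-v s) (v' s)], two_mul_le_add_sq _ _⟩
  refine antitoneOn_of_hasDerivWithinAt_nonpos (convex_Ioi 0)
    (fun s hs => (deriv s hs).continuousAt.continuousWithinAt)
    (fun s hs => (deriv s (interior_subset hs)).hasDerivWithinAt) fun s _ => ?_
  exact mul_nonpos_of_nonpos_of_nonneg
    (div_nonpos_of_nonpos_of_nonneg (sub_nonpos.2 (cross_term_le s)) (sq_nonneg s))
    (Real.exp_pos _).le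

lemma exists_forall_abs_le_of_perturbed_oscillator {v v' : ℝ → ℝ} {κ : ℝ}
    (hv : ∀ s, 0 < s → HasDerivAt v (v' s) s)
    (hv' : ∀ s, 0 < s → HasDerivAt v' ((κ / s ^ 2 - 1) * v s) s) :
    ∃ C, ∀ s, 1 ≤ s → |v s| ≤ C := by
  refine ⟨√((v 1 ^ 2 + v' 1 ^ 2) * Real.exp (|κ| / 1)), fun s hs => Real.abs_le_sqrt ?_⟩
  have hs0 : 0 < s := by linarith
  calc v s ^ 2 ≤ (v s ^ 2 + v' s ^ 2) * 1 := by linarith [sq_nonneg (v' s)]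
    _ ≤ (v s ^ 2 + v' s ^ 2) * Real.exp (|κ| / s) := by
        gcongr
        exact Real.one_le_exp (by positivity)
    _ ≤ _ := antitoneOn_energy_mul_exp hv hv' (mem_Ioi.2 one_pos) hs0 hs

-- Liouville's substitution `v = s ^ a * u` removes the first-order term.
lemma exists_forall_abs_le_rpow_neg_of_bessel_ode {u u' u'' : ℝ → ℝ} {a : ℝ}
    (hu : ∀ s, 0 < s → HasDerivAt u (u' s) s) (hu' : ∀ s, 0 < s → HasDerivAt u' (u'' s) s)
    (ode : ∀ s, 0 < s → s * (u'' s + u s) = -(2 * a * u' s)) :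
    ∃ C, ∀ s, 1 ≤ s → |u s| ≤ C * s ^ (-a) := by
  have deriv_v (s : ℝ) (hs : 0 < s) : HasDerivAt (fun s => s ^ a * u s)
      (a * s ^ (a - 1) * u s + s ^ a * u' s) s :=
    (Real.hasDerivAt_rpow_const (.inl hs.ne')).mul (hu s hs)
  have deriv_v' (s : ℝ) (hs : 0 < s) :
      HasDerivAt (fun s => a * s ^ (a - 1) * u s + s ^ a * u' s)
        ((a * (a - 1) / s ^ 2 - 1) * (s ^ a * u s)) s := by
    have deriv := (((Real.hasDerivAt_rpow_const (p := a - 1) (.inl hs.ne')).const_mul a).mul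
      (hu s hs)).add ((Real.hasDerivAt_rpow_const (p := a) (.inl hs.ne')).mul (hu' s hs))
    have u''_eq : u'' s = -(2 * a * u' s) / s - u s := by
      rw [← ode s hs]; field_simp; ring
    refine deriv.congr_deriv ?_
    rw [Real.rpow_sub_one hs.ne' (a - 1), Real.rpow_sub_one hs.ne', u''_eq]
    field_simp
    ring
  obtain ⟨C, hC⟩ := exists_forall_abs_le_of_perturbed_oscillator deriv_v deriv_v'
  refine ⟨C, fun s hs => ?_⟩
  have rpow_pos : 0 < s ^ a := Real.rpow_pos_of_pos (by linarith) a
  rw [Real.rpow_neg (by linarith), ← div_eq_mul_inv, le_div_iff₀ rpow_pos, mul_comm]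
  simpa [abs_mul, abs_of_pos rpow_pos] using hC s hs

end DecayOfODESolutions

section SphericalDecay

variable (V : Type*) [NormedAddCommGroup V] [InnerProductSpace ℝ V] [FiniteDimensional ℝ V]
  [Nontrivial V] [MeasurableSpace V] [BorelSpace V]

lemma exists_forall_abs_cosTransform_uniformSphere_le :
    ∃ C, 0 < C ∧ ∀ ξ : V, ξ ≠ 0 →
      |cosTransform (uniformSphere V) ξ| ≤ C * ‖ξ‖ ^ (-((Module.finrank ℝ V - 1 : ℝ) / 2)) := by
  set a : ℝ := (Module.finrank ℝ V - 1 : ℝ) / 2 with ha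
  have a_nonneg : 0 ≤ a := by
    have : (1 : ℝ) ≤ Module.finrank ℝ V := mod_cast Module.finrank_pos (R := ℝ) (M := V)
    linarith
  let b := stdOrthonormalBasis ℝ V
  let i : Fin (Module.finrank ℝ V) := ⟨0, Module.finrank_pos⟩
  obtain ⟨C, hC⟩ := exists_forall_abs_le_rpow_neg_of_bessel_ode (a := a)
    (fun s _ => hasDerivAt_sphericalProfile (b i) s)
    (fun s _ => hasDerivAt_deriv_sphericalProfile (b i) s)
    (fun s _ => by rw [ha]; linarith [sphericalProfile_ode b i s])
  refine ⟨max C 1, by positivity, fun ξ hξ => ?_⟩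
  rcases le_or_gt 1 ‖ξ‖ with h | h
  · have profile_eq : cosTransform (uniformSphere V) ξ = sphericalProfile (b i) ‖ξ‖ :=
      cosTransform_uniformSphere_eq_of_norm_eq (by simp [norm_smul, b.norm_eq_one])
    rw [profile_eq]
    exact (hC _ h).trans (by gcongr; exact le_max_left _ _)
  · calc |cosTransform (uniformSphere V) ξ| ≤ 1 * 1 := by
          simpa using abs_cosTransform_le_one (uniformSphere V) ξ
      _ ≤ max C 1 * ‖ξ‖ ^ (-a) := by
          gcongr
          · exact le_max_right _ _
          · exact Real.one_le_rpow_of_pos_of_le_one_of_nonpos (norm_pos_iff.2 hξ) h.le (by simpa)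

end SphericalDecay

section SphericalLowerBound

variable {V : Type*} [NormedAddCommGroup V] [InnerProductSpace ℝ V]

lemma three_add_two_mul_cos_eq_sq_add_sq (α β : ℝ) :
    3 + 2 * Real.cos α + 2 * Real.cos β + 2 * Real.cos (α - β) =
      (1 + Real.cos α + Real.cos β) ^ 2 + (Real.sin α + Real.sin β) ^ 2 := by
  rw [Real.cos_sub]
  linear_combination -(Real.sin_sq_add_cos_sq α) - Real.sin_sq_add_cos_sq β

lemma cos_eq_neg_half_of_three_add_two_mul_cos_eq_zero {α β : ℝ}
    (h : 3 + 2 * Real.cos α + 2 * Real.cos β + 2 * Real.cos (α - β) = 0) :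
    Real.cos α = -1 / 2 := by
  rw [three_add_two_mul_cos_eq_sq_add_sq] at h
  have cos_β : Real.cos β = -1 - Real.cos α := by
    nlinarith [sq_nonneg (Real.sin α + Real.sin β)]
  have sin_β : Real.sin β = -Real.sin α := by
    nlinarith [sq_nonneg (1 + Real.cos α + Real.cos β)]
  have pythagoras_β := Real.sin_sq_add_cos_sq β
  rw [cos_β, sin_β] at pythagoras_β
  linarith [Real.sin_sq_add_cos_sq α]

lemma exists_norm_eq_one_inner_eq_zero (hV : 2 ≤ Module.finrank ℝ V) (ξ : V) :
    ∃ f : V, ‖f‖ = 1 ∧ inner ℝ ξ f = 0 := by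
  have span_ne_top : ℝ ∙ ξ ≠ ⊤ := by
    intro h
    have := finrank_span_le_card (R := ℝ) ({ξ} : Set V)
    rw [h, finrank_top, Set.toFinset_singleton, Finset.card_singleton] at this
    lia
  obtain ⟨f, hf, f_ne_zero⟩ := Submodule.exists_mem_ne_zero_of_ne_bot
    (mt Submodule.orthogonal_eq_bot_iff.1 span_ne_top)
  refine ⟨NormedSpace.normalize f, NormedSpace.norm_normalize f_ne_zero, ?_⟩
  rw [NormedSpace.normalize, inner_smul_right,
    Submodule.mem_orthogonal_singleton_iff_inner_right.1 hf, mul_zero]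

lemma exists_equilateral (hV : 2 ≤ Module.finrank ℝ V) (ξ : V) :
    ∃ η : V, ‖η‖ = ‖ξ‖ ∧ ‖ξ - η‖ = ‖ξ‖ := by
  obtain ⟨f, norm_f, inner_f⟩ := exists_norm_eq_one_inner_eq_zero hV ξ
  have norm_eq {α : ℝ} (hα : α ^ 2 = 1 / 4) (β : ℝ) (hβ : β ^ 2 = 3 / 4) :
      ‖α • ξ + (β * ‖ξ‖) • f‖ = ‖ξ‖ := by
    rw [← sq_eq_sq₀ (norm_nonneg _) (norm_nonneg _), norm_add_sq_real]
    simp only [norm_smul, mul_pow, norm_f, inner_smul_left, inner_smul_right, inner_f,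
      Real.norm_eq_abs, abs_mul, sq_abs, hα, hβ, abs_norm]
    ring
  have sq_sqrt_div : (√3 / 2) ^ 2 = 3 / 4 := by norm_num [div_pow]
  refine ⟨(1 / 2 : ℝ) • ξ + (√3 / 2 * ‖ξ‖) • f, norm_eq (by norm_num) _ sq_sqrt_div, ?_⟩
  convert norm_eq (α := 1 / 2) (by norm_num) (-(√3 / 2)) (by rw [neg_sq, sq_sqrt_div]) using 2
  module

variable [FiniteDimensional ℝ V] [MeasurableSpace V] [BorelSpace V]

lemma integral_three_cos_uniformSphere {ξ η : V} (hη : ‖η‖ = ‖ξ‖) (hξη : ‖ξ - η‖ = ‖ξ‖) :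
    ∫ ω, (3 + 2 * Real.cos (inner ℝ ω ξ) + 2 * Real.cos (inner ℝ ω η) +
      2 * Real.cos (inner ℝ ω ξ - inner ℝ ω η)) ∂uniformSphere V =
      3 + 6 * cosTransform (uniformSphere V) ξ := by
  have integrable_two_mul_cos (ζ : V) :
      Integrable (fun ω => 2 * Real.cos (inner ℝ ω ζ)) (uniformSphere V) :=
    (integrable_cos_inner _ ζ).const_mul 2
  have integral_two_mul_cos {ζ : V} (hζ : ‖ζ‖ = ‖ξ‖) :
      ∫ ω, 2 * Real.cos (inner ℝ ω ζ) ∂uniformSphere V =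
        2 * cosTransform (uniformSphere V) ξ := by
    rw [integral_const_mul, ← cosTransform_uniformSphere_eq_of_norm_eq hζ, cosTransform]
  simp only [← inner_sub_right]
  rw [integral_add (by fun_prop) (integrable_two_mul_cos _),
    integral_add (by fun_prop) (integrable_two_mul_cos η),
    integral_add (by fun_prop) (integrable_two_mul_cos ξ), integral_two_mul_cos rfl,
    integral_two_mul_cos hη, integral_two_mul_cos hξη, integral_const]
  simp only [probReal_univ, one_smul]
  ring

lemma neg_half_le_cosTransform_uniformSphere (hV : 2 ≤ Module.finrank ℝ V) (ξ : V) :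
    -1 / 2 ≤ cosTransform (uniformSphere V) ξ := by
  obtain ⟨η, hη, hξη⟩ := exists_equilateral hV ξ
  have integral_nonneg : 0 ≤ 3 + 6 * cosTransform (uniformSphere V) ξ := by
    rw [← integral_three_cos_uniformSphere hη hξη]
    refine integral_nonneg fun ω => ?_
    simp only [three_add_two_mul_cos_eq_sq_add_sq, Pi.zero_apply]
    positivity
  linarith

lemma ae_cos_inner_eq_neg_half (hV : 2 ≤ Module.finrank ℝ V) {ξ : V}
    (h : cosTransform (uniformSphere V) ξ = -1 / 2) :
    ∀ᵐ ω ∂uniformSphere V, Real.cos (inner ℝ ω ξ) = -1 / 2 := by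
  obtain ⟨η, hη, hξη⟩ := exists_equilateral hV ξ
  have integral_eq := integral_three_cos_uniformSphere hη hξη
  rw [show 3 + 6 * cosTransform (uniformSphere V) ξ = 0 by rw [h]; norm_num,
    integral_eq_zero_iff_of_nonneg] at integral_eq
  · filter_upwards [integral_eq] with ω hω
    exact cos_eq_neg_half_of_three_add_two_mul_cos_eq_zero hω
  · intro ω
    simp only [three_add_two_mul_cos_eq_sq_add_sq, Pi.zero_apply]
    positivity
  · simp only [← inner_sub_right]
    exact (((integrable_const 3).add ((integrable_cos_inner _ ξ).const_mul 2)).add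
      ((integrable_cos_inner _ η).const_mul 2)).add ((integrable_cos_inner _ _).const_mul 2)

lemma cosTransform_uniformSphere_two_smul_eq_neg_half (hV : 2 ≤ Module.finrank ℝ V) {ξ : V}
    (h : cosTransform (uniformSphere V) ξ = -1 / 2) :
    cosTransform (uniformSphere V) ((2 : ℝ) • ξ) = -1 / 2 := by
  have double_angle : ∀ᵐ ω ∂uniformSphere V, Real.cos (inner ℝ ω ((2 : ℝ) • ξ)) = -1 / 2 := by
    filter_upwards [ae_cos_inner_eq_neg_half hV h] with ω hω
    rw [inner_smul_right, Real.cos_two_mul, hω]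
    norm_num
  simpa [cosTransform] using integral_congr_ae double_angle

lemma tendsto_cosTransform_uniformSphere_cocompact (hV : 2 ≤ Module.finrank ℝ V) :
    Tendsto (cosTransform (uniformSphere V)) (cocompact V) (𝓝 0) := by
  have : Nontrivial V := Module.nontrivial_of_finrank_pos (R := ℝ) (by lia)
  obtain ⟨C, -, hC⟩ := exists_forall_abs_cosTransform_uniformSphere_le V
  have exponent_pos : 0 < (Module.finrank ℝ V - 1 : ℝ) / 2 := by
    have : (2 : ℝ) ≤ Module.finrank ℝ V := mod_cast hV
    linarith
  have majorant := ((tendsto_rpow_neg_atTop exponent_pos).comp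
    (tendsto_norm_cocompact_atTop (E := V))).const_mul C
  rw [mul_zero] at majorant
  refine squeeze_zero_norm' ?_ majorant
  filter_upwards [isCompact_singleton.compl_mem_cocompact (s := {(0 : V)})] with ξ hξ
  exact hC ξ hξ

lemma neg_half_lt_cosTransform_uniformSphere (hV : 2 ≤ Module.finrank ℝ V) (ξ : V) :
    -1 / 2 < cosTransform (uniformSphere V) ξ := by
  refine (neg_half_le_cosTransform_uniformSphere hV ξ).lt_of_ne' fun h => ?_
  have eq_neg_half (k : ℕ) : cosTransform (uniformSphere V) ((2 : ℝ) ^ k • ξ) = -1 / 2 := by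
    induction k with
    | zero => simpa using h
    | succ k ih =>
      rw [pow_succ', mul_smul]
      exact cosTransform_uniformSphere_two_smul_eq_neg_half hV ih
  have ξ_ne_zero : ξ ≠ 0 := by
    rintro rfl
    norm_num [cosTransform] at h
  have escape : Tendsto (fun k : ℕ => (2 : ℝ) ^ k • ξ) atTop (cocompact V) := by
    rw [← cobounded_eq_cocompact, ← tendsto_norm_atTop_iff_cobounded]
    simpa [norm_smul] using (tendsto_pow_atTop_atTop_of_one_lt one_lt_two).atTop_mul_const
      (norm_pos_iff.2 ξ_ne_zero)
  have limit := (tendsto_cosTransform_uniformSphere_cocompact hV).comp escape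
  simp only [Function.comp_def, eq_neg_half] at limit
  norm_num [tendsto_const_nhds_iff] at limit

lemma exists_lt_half_forall_neg_le_cosTransform_uniformSphere (hV : 2 ≤ Module.finrank ℝ V) :
    ∃ b : ℝ, 0 < b ∧ b < 1 / 2 ∧ ∀ ξ : V, -b ≤ cosTransform (uniformSphere V) ξ := by
  let f (ξ : V) : ℝ := min (cosTransform (uniformSphere V) ξ) (-1 / 4)
  have le_at_infinity : ∀ᶠ ξ in cocompact V, f 0 ≤ f ξ := by
    filter_upwards [(tendsto_cosTransform_uniformSphere_cocompact hV).eventually_const_lt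
      (by norm_num : (-1 / 4 : ℝ) < 0)] with ξ hξ
    exact (min_le_right _ _).trans (le_min hξ.le le_rfl)
  obtain ⟨ξ, hξ⟩ := ((continuous_cosTransform _).min continuous_const).exists_forall_le' 0
    le_at_infinity
  refine ⟨-f ξ, ?_, ?_, fun ζ => ?_⟩
  · have : f ξ ≤ -1 / 4 := min_le_right _ _
    linarith
  · have : -1 / 2 < f ξ := lt_min (neg_half_lt_cosTransform_uniformSphere hV ξ) (by norm_num)
    linarith
  · rw [neg_neg]
    exact (hξ ζ).trans (min_le_left _ _)

end SphericalLowerBound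

section GaussianSummation

variable {V : Type*} [NormedAddCommGroup V] [InnerProductSpace ℝ V] [FiniteDimensional ℝ V]
  [MeasurableSpace V] [BorelSpace V]

lemma integrable_exp_neg_mul_sq_norm (V : Type*) [NormedAddCommGroup V] [InnerProductSpace ℝ V]
    [FiniteDimensional ℝ V] [MeasurableSpace V] [BorelSpace V] {t : ℝ} (ht : 0 < t) :
    Integrable fun ξ : V => Real.exp (-t * ‖ξ‖ ^ 2) := by
  have := (GaussianFourier.integrable_cexp_neg_mul_sq_norm_add (V := V) (b := t)
    (by simpa using ht) 0 0).norm
  simpa [Complex.norm_exp, ← Complex.ofReal_pow] using this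

lemma integral_gaussian_mul_charFun (ν : Measure V) [IsFiniteMeasure ν] {t : ℝ} (ht : 0 < t) :
    ∫ ξ, Complex.exp (-t * ‖ξ‖ ^ 2) * charFun ν ξ =
      ((Real.pi / t) ^ ((Module.finrank ℝ V : ℝ) / 2) *
        ∫ z, Real.exp (-(‖z‖ ^ 2 / (4 * t))) ∂ν : ℝ) := by
  set G : V → V → ℂ := fun ξ z => Complex.exp (-t * ‖ξ‖ ^ 2 + Complex.I * (inner ℝ z ξ : ℝ))
    with hG
  have integrable_G : Integrable (Function.uncurry G) (volume.prod ν) := by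
    refine ((integrable_exp_neg_mul_sq_norm V ht).mul_prod (integrable_const (1 : ℝ))).mono'
      (by fun_prop) (.of_forall fun p => ?_)
    simp [hG, Function.uncurry_def, Complex.norm_exp, ← Complex.ofReal_pow]
  have integral_right (ξ : V) :
      ∫ z, G ξ z ∂ν = Complex.exp (-t * ‖ξ‖ ^ 2) * charFun ν ξ := by
    simp only [hG, Complex.exp_add, integral_const_mul, charFun_apply, mul_comm Complex.I]
  have integral_left (z : V) : ∫ ξ, G ξ z =
      ((Real.pi / t) ^ ((Module.finrank ℝ V : ℝ) / 2) *
        Real.exp (-(‖z‖ ^ 2 / (4 * t))) : ℝ) := by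
    simp only [hG]
    rw [GaussianFourier.integral_cexp_neg_mul_sq_norm_add (by simpa using ht),
      Complex.ofReal_mul, Complex.ofReal_cpow (by positivity)]
    push_cast
    rw [Complex.I_sq, neg_one_mul, neg_div]
  have swap := integral_integral_swap integrable_G
  simp only [integral_right, integral_left] at swap
  rw [swap, integral_complex_ofReal, integral_const_mul]

-- The Gaussian means of `charFun ν` are heat-kernel averages of `ν` at the origin.
lemma integral_charFun_eq_zero (ν : Measure V) [IsFiniteMeasure ν]
    (hint : Integrable (charFun ν)) {η : ℝ} (hη : 0 < η) (hν : ∀ᵐ z ∂ν, η ≤ ‖z‖) :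
    ∫ ξ, charFun ν ξ = 0 := by
  set k : ℝ := Module.finrank ℝ V / 2
  refine tendsto_nhds_unique (Real.tendsto_integral_cexp_sq_smul hint) ?_
  have tendsto_bound : Tendsto (fun s : ℝ => Real.pi ^ k * ν.real univ *
      (s ^ k * Real.exp (-(η ^ 2 / 4) * s))) atTop (𝓝 0) := by
    simpa using (tendsto_rpow_mul_exp_neg_mul_atTop_nhds_zero k (η ^ 2 / 4)
      (by positivity)).const_mul (Real.pi ^ k * ν.real univ)
  refine squeeze_zero_norm' ?_ tendsto_bound
  filter_upwards [eventually_gt_atTop 0] with s hs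
  have integral_heat_le : ∫ z, Real.exp (-(‖z‖ ^ 2 / (4 * s⁻¹))) ∂ν ≤
      Real.exp (-(η ^ 2 / 4) * s) * ν.real univ := by
    have heat_le : ∀ᵐ z ∂ν, ‖Real.exp (-(‖z‖ ^ 2 / (4 * s⁻¹)))‖ ≤ Real.exp (-(η ^ 2 / 4) * s) := by
      filter_upwards [hν] with z hz
      rw [Real.norm_of_nonneg (Real.exp_pos _).le, Real.exp_le_exp,
        show ‖z‖ ^ 2 / (4 * s⁻¹) = ‖z‖ ^ 2 / 4 * s by field_simp, ← neg_mul]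
      gcongr
    exact (le_abs_self _).trans (norm_integral_le_of_norm_le_const heat_le)
  have gaussian_mean := integral_gaussian_mul_charFun ν (inv_pos.2 hs)
  push_cast [smul_eq_mul] at gaussian_mean ⊢
  rw [gaussian_mean]
  norm_cast
  rw [Real.norm_of_nonneg (mul_nonneg (by positivity) (integral_nonneg fun _ => (by positivity)))]
  calc (Real.pi / s⁻¹) ^ k * ∫ z, Real.exp (-(‖z‖ ^ 2 / (4 * s⁻¹))) ∂ν
      ≤ (Real.pi / s⁻¹) ^ k * (Real.exp (-(η ^ 2 / 4) * s) * ν.real univ) := by gcongr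
    _ = Real.pi ^ k * ν.real univ * (s ^ k * Real.exp (-(η ^ 2 / 4) * s)) := by
        rw [div_inv_eq_mul, Real.mul_rpow Real.pi_pos.le hs.le]; ring

end GaussianSummation

section PowerSpectrum

variable {V : Type*} [NormedAddCommGroup V] [InnerProductSpace ℝ V] [MeasurableSpace V]

/-- The power spectrum `|μ̂|²` of a measure. -/
def powerSpectrum (μ : Measure V) (ξ : V) : ℝ := ‖charFun μ ξ‖ ^ 2

lemma powerSpectrum_nonneg (μ : Measure V) (ξ : V) : 0 ≤ powerSpectrum μ ξ := sq_nonneg _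

lemma powerSpectrum_le (μ : Measure V) (ξ : V) : powerSpectrum μ ξ ≤ μ.real univ ^ 2 := by
  unfold powerSpectrum
  gcongr
  exact norm_charFun_le ξ

/-- The autocorrelation `μ ∗ μ(-·)` of a measure: the law of `x - y` for `x`, `y` independent
with law `μ`. -/
def autocorrelation (μ : Measure V) : Measure V := μ ∗ μ.map ((-1 : ℝ) • ·)

instance isFiniteMeasure_autocorrelation (μ : Measure V) [IsFiniteMeasure μ] :
    IsFiniteMeasure (autocorrelation μ) := by
  unfold autocorrelation; infer_instance

variable [BorelSpace V]

lemma continuous_powerSpectrum [SecondCountableTopology V] (μ : Measure V) [IsFiniteMeasure μ] :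
    Continuous (powerSpectrum μ) :=
  (continuous_charFun (μ := μ)).norm.pow 2

lemma charFun_autocorrelation [SecondCountableTopology V] (μ : Measure V) [IsFiniteMeasure μ]
    (ξ : V) : charFun (autocorrelation μ) ξ = powerSpectrum μ ξ := by
  rw [autocorrelation, charFun_conv, charFun_map_smul, neg_one_smul, charFun_neg,
    Complex.mul_conj, Complex.normSq_eq_norm_sq, powerSpectrum]

lemma autocorrelation_mono [SecondCountableTopology V] {μ μ' : Measure V} [SFinite μ]
    (h : μ' ≤ μ) : autocorrelation μ' ≤ autocorrelation μ :=
  Measure.map_mono (Measure.prod_mono h (Measure.map_mono h (by fun_prop))) (by fun_prop)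

variable [FiniteDimensional ℝ V]

lemma integral_gaussian_mul_powerSpectrum (μ : Measure V) [IsFiniteMeasure μ] {t : ℝ}
    (ht : 0 < t) : ∫ ξ, Real.exp (-t * ‖ξ‖ ^ 2) * powerSpectrum μ ξ =
      (Real.pi / t) ^ ((Module.finrank ℝ V : ℝ) / 2) *
        ∫ z, Real.exp (-(‖z‖ ^ 2 / (4 * t))) ∂autocorrelation μ := by
  have := integral_gaussian_mul_charFun (autocorrelation μ) ht
  simp only [charFun_autocorrelation] at this
  exact_mod_cast this

lemma integral_gaussian_mul_powerSpectrum_mono {μ μ' : Measure V} [IsFiniteMeasure μ]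
    [IsFiniteMeasure μ'] (h : μ' ≤ μ) {t : ℝ} (ht : 0 < t) :
    ∫ ξ, Real.exp (-t * ‖ξ‖ ^ 2) * powerSpectrum μ' ξ ≤
      ∫ ξ, Real.exp (-t * ‖ξ‖ ^ 2) * powerSpectrum μ ξ := by
  have integrable_heat : Integrable (fun z => Real.exp (-(‖z‖ ^ 2 / (4 * t))))
      (autocorrelation μ) := by
    refine .of_bound (C := 1) (by fun_prop) (.of_forall fun z => ?_)
    rw [Real.norm_of_nonneg (Real.exp_pos _).le, Real.exp_le_one_iff, neg_nonpos]
    positivity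
  rw [integral_gaussian_mul_powerSpectrum μ' ht, integral_gaussian_mul_powerSpectrum μ ht]
  exact mul_le_mul_of_nonneg_left (integral_mono_measure (autocorrelation_mono h)
    (.of_forall fun _ => (Real.exp_pos _).le) integrable_heat) (by positivity)

lemma integrable_gaussian_mul_powerSpectrum (μ : Measure V) [IsFiniteMeasure μ] {t : ℝ}
    (ht : 0 < t) : Integrable fun ξ => Real.exp (-t * ‖ξ‖ ^ 2) * powerSpectrum μ ξ :=
  (integrable_exp_neg_mul_sq_norm V ht).mul_bdd (c := μ.real univ ^ 2)
    (continuous_powerSpectrum μ).aestronglyMeasurable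
    (.of_forall fun ξ => (Real.norm_of_nonneg (powerSpectrum_nonneg μ ξ)).trans_le
      (powerSpectrum_le μ ξ))

end PowerSpectrum

section BesselWeight

variable {V : Type*} [NormedAddCommGroup V]

/-- The Bessel weight `(1 + ‖ξ‖²) ^ (-a / 2)`, comparable to `‖ξ‖ ^ (-a)` away from the origin.
Being a mixture of Gaussians, it integrates power spectra monotonically in the measure. -/
def besselWeight (a : ℝ) (ξ : V) : ℝ := (1 + ‖ξ‖ ^ 2) ^ (-(a / 2))

lemma besselWeight_pos (a : ℝ) (ξ : V) : 0 < besselWeight a ξ := by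
  unfold besselWeight; positivity

lemma continuous_besselWeight (a : ℝ) : Continuous (besselWeight a : V → ℝ) :=
  (by fun_prop : Continuous fun ξ : V => 1 + ‖ξ‖ ^ 2).rpow_const fun _ => .inl (by positivity)

lemma besselWeight_le_one {a : ℝ} (ha : 0 ≤ a) (ξ : V) : besselWeight a ξ ≤ 1 :=
  Real.rpow_le_one_of_one_le_of_nonpos (le_add_of_nonneg_right (sq_nonneg _)) (by linarith)

lemma sq_rpow_neg_half {x : ℝ} (hx : 0 ≤ x) (a : ℝ) : (x ^ 2) ^ (-(a / 2)) = x ^ (-a) := by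
  rw [← Real.rpow_natCast, ← Real.rpow_mul hx]
  congr 1
  push_cast
  ring

lemma besselWeight_le_rpow_neg {a : ℝ} (ha : 0 ≤ a) {ξ : V} (hξ : ξ ≠ 0) :
    besselWeight a ξ ≤ ‖ξ‖ ^ (-a) := by
  have norm_pos : 0 < ‖ξ‖ := norm_pos_iff.2 hξ
  calc besselWeight a ξ ≤ (‖ξ‖ ^ 2) ^ (-(a / 2)) :=
        Real.rpow_le_rpow_of_nonpos (by positivity) (by linarith) (by linarith)
    _ = ‖ξ‖ ^ (-a) := sq_rpow_neg_half norm_pos.le a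

lemma min_one_rpow_neg_le_besselWeight {a : ℝ} (ha : 0 ≤ a) {ξ : V} (hξ : ξ ≠ 0) :
    min 1 (‖ξ‖ ^ (-a)) ≤ 2 ^ (a / 2) * besselWeight a ξ := by
  have norm_pos : 0 < ‖ξ‖ := norm_pos_iff.2 hξ
  have le_of_le {s : ℝ} (hs : 0 < s) (h : 1 + ‖ξ‖ ^ 2 ≤ 2 * s) :
      s ^ (-(a / 2)) ≤ 2 ^ (a / 2) * besselWeight a ξ := by
    calc s ^ (-(a / 2)) = 2 ^ (a / 2) * (2 * s) ^ (-(a / 2)) := by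
          rw [Real.mul_rpow two_pos.le hs.le, ← mul_assoc, ← Real.rpow_add two_pos]; simp
      _ ≤ 2 ^ (a / 2) * besselWeight a ξ := by
          gcongr
          exact Real.rpow_le_rpow_of_nonpos (by positivity) h (by linarith)
  rcases le_total ‖ξ‖ 1 with h | h
  · refine (min_le_left _ _).trans ?_
    simpa using le_of_le one_pos (by nlinarith)
  · refine (min_le_right _ _).trans ?_
    exact sq_rpow_neg_half norm_pos.le a ▸ le_of_le (by positivity) (by nlinarith)

lemma lintegral_gaussian_eq_besselWeight {a : ℝ} (ha : 0 < a) (ξ : V) :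
    ∫⁻ t in Ioi (0 : ℝ), ENNReal.ofReal (t ^ (a / 2 - 1) * Real.exp (-((1 + ‖ξ‖ ^ 2) * t))) =
      ENNReal.ofReal (Real.Gamma (a / 2)) * ENNReal.ofReal (besselWeight a ξ) := by
  have base_pos : 0 < 1 + ‖ξ‖ ^ 2 := by positivity
  have gamma_pos : 0 < Real.Gamma (a / 2) := Real.Gamma_pos_of_pos (half_pos ha)
  have integral_eq : ∫ t in Ioi (0 : ℝ), t ^ (a / 2 - 1) * Real.exp (-((1 + ‖ξ‖ ^ 2) * t)) =
      Real.Gamma (a / 2) * besselWeight a ξ := by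
    rw [Real.integral_rpow_mul_exp_neg_mul_Ioi (half_pos ha) base_pos, besselWeight,
      Real.rpow_neg base_pos.le, one_div, Real.inv_rpow base_pos.le, mul_comm]
  rw [← ENNReal.ofReal_mul gamma_pos.le, ← integral_eq, ofReal_integral_eq_lintegral_ofReal]
  · exact .of_integral_ne_zero (integral_eq ▸ (mul_pos gamma_pos (besselWeight_pos a ξ)).ne')
  · filter_upwards [ae_restrict_mem measurableSet_Ioi] with t (ht : 0 < t)
    positivity

variable [InnerProductSpace ℝ V] [MeasurableSpace V]

lemma powerSpectrum_mul_besselWeight_nonneg (μ : Measure V) (a : ℝ) (ξ : V) :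
    0 ≤ powerSpectrum μ ξ * besselWeight a ξ :=
  mul_nonneg (powerSpectrum_nonneg μ ξ) (besselWeight_pos a ξ).le

variable [FiniteDimensional ℝ V] [BorelSpace V]

lemma lintegral_powerSpectrum_mul_besselWeight (μ : Measure V) [IsFiniteMeasure μ] {a : ℝ}
    (ha : 0 < a) :
    ENNReal.ofReal (Real.Gamma (a / 2)) *
        ∫⁻ ξ, ENNReal.ofReal (powerSpectrum μ ξ * besselWeight a ξ) =
      ∫⁻ t in Ioi (0 : ℝ), ENNReal.ofReal (t ^ (a / 2 - 1) * Real.exp (-t)) *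
        ENNReal.ofReal (∫ ξ, Real.exp (-t * ‖ξ‖ ^ 2) * powerSpectrum μ ξ) := by
  have := (continuous_powerSpectrum μ).measurable
  have := (continuous_besselWeight (V := V) a).measurable
  have subordination (ξ : V) :
      ENNReal.ofReal (Real.Gamma (a / 2)) *
          ENNReal.ofReal (powerSpectrum μ ξ * besselWeight a ξ) =
        ∫⁻ t in Ioi (0 : ℝ), ENNReal.ofReal (powerSpectrum μ ξ) *
          ENNReal.ofReal (t ^ (a / 2 - 1) * Real.exp (-((1 + ‖ξ‖ ^ 2) * t))) := by
    rw [lintegral_const_mul _ (by fun_prop), lintegral_gaussian_eq_besselWeight ha,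
      ENNReal.ofReal_mul (powerSpectrum_nonneg μ ξ)]
    ring
  rw [← lintegral_const_mul _ (by fun_prop)]
  simp only [subordination]
  rw [lintegral_lintegral_swap (by fun_prop)]
  refine setLIntegral_congr_fun measurableSet_Ioi fun t (ht : 0 < t) => ?_
  rw [ofReal_integral_eq_lintegral_ofReal (integrable_gaussian_mul_powerSpectrum μ ht)
    (.of_forall fun ξ => mul_nonneg (Real.exp_pos _).le (powerSpectrum_nonneg μ ξ)),
    ← lintegral_const_mul _ (by fun_prop)]
  refine lintegral_congr fun ξ => ?_
  rw [← ENNReal.ofReal_mul (powerSpectrum_nonneg μ ξ), ← ENNReal.ofReal_mul (by positivity),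
    show -((1 + ‖ξ‖ ^ 2) * t) = -t + -t * ‖ξ‖ ^ 2 by ring, Real.exp_add]
  ring_nf

lemma lintegral_powerSpectrum_mul_besselWeight_mono {μ μ' : Measure V} [IsFiniteMeasure μ]
    [IsFiniteMeasure μ'] (h : μ' ≤ μ) {a : ℝ} (ha : 0 < a) :
    ∫⁻ ξ, ENNReal.ofReal (powerSpectrum μ' ξ * besselWeight a ξ) ≤
      ∫⁻ ξ, ENNReal.ofReal (powerSpectrum μ ξ * besselWeight a ξ) := by
  have gamma_ne_zero : ENNReal.ofReal (Real.Gamma (a / 2)) ≠ 0 := by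
    simpa using Real.Gamma_pos_of_pos (half_pos ha)
  rw [← ENNReal.mul_le_mul_iff_right gamma_ne_zero ENNReal.ofReal_ne_top,
    lintegral_powerSpectrum_mul_besselWeight μ' ha, lintegral_powerSpectrum_mul_besselWeight μ ha]
  refine setLIntegral_mono' measurableSet_Ioi fun t (ht : 0 < t) => ?_
  gcongr _ * ENNReal.ofReal ?_
  exact integral_gaussian_mul_powerSpectrum_mono h ht

lemma aestronglyMeasurable_powerSpectrum_mul_besselWeight (μ : Measure V) [IsFiniteMeasure μ]
    (a : ℝ) : AEStronglyMeasurable fun ξ => powerSpectrum μ ξ * besselWeight a ξ :=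
  ((continuous_powerSpectrum μ).mul (continuous_besselWeight a)).aestronglyMeasurable

lemma integrable_powerSpectrum_mul_besselWeight_of_le {μ μ' : Measure V} [IsFiniteMeasure μ]
    [IsFiniteMeasure μ'] (h : μ' ≤ μ) {a : ℝ} (ha : 0 < a)
    (hint : Integrable fun ξ => powerSpectrum μ ξ * besselWeight a ξ) :
    Integrable fun ξ => powerSpectrum μ' ξ * besselWeight a ξ := by
  rw [← lintegral_ofReal_ne_top_iff_integrable
    (aestronglyMeasurable_powerSpectrum_mul_besselWeight _ a)
    (.of_forall (powerSpectrum_mul_besselWeight_nonneg _ a))] at hint ⊢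
  exact ne_top_of_le_ne_top hint (lintegral_powerSpectrum_mul_besselWeight_mono h ha)

lemma integral_powerSpectrum_mul_besselWeight_mono {μ μ' : Measure V} [IsFiniteMeasure μ]
    [IsFiniteMeasure μ'] (h : μ' ≤ μ) {a : ℝ} (ha : 0 < a)
    (hint : Integrable fun ξ => powerSpectrum μ ξ * besselWeight a ξ) :
    ∫ ξ, powerSpectrum μ' ξ * besselWeight a ξ ≤ ∫ ξ, powerSpectrum μ ξ * besselWeight a ξ := by
  have hint' := integrable_powerSpectrum_mul_besselWeight_of_le h ha hint
  have nonneg (ν : Measure V) := powerSpectrum_mul_besselWeight_nonneg ν a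
  rw [← ENNReal.ofReal_le_ofReal_iff (integral_nonneg (nonneg μ)),
    ofReal_integral_eq_lintegral_ofReal hint (.of_forall (nonneg μ)),
    ofReal_integral_eq_lintegral_ofReal hint' (.of_forall (nonneg μ'))]
  exact lintegral_powerSpectrum_mul_besselWeight_mono h ha

end BesselWeight

section MissingDistance

lemma exists_pos_forall_le_abs_dist_sub {X : Type*} [PseudoMetricSpace X] {K : Set X}
    (hK : IsCompact K) {r : ℝ} (hr : ∀ x ∈ K, ∀ y ∈ K, dist x y ≠ r) :
    ∃ η, 0 < η ∧ ∀ x ∈ K, ∀ y ∈ K, η ≤ |dist x y - r| := by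
  have isClosed_dist : IsClosed ((fun p : X × X => dist p.1 p.2) '' K ×ˢ K) :=
    ((hK.prod hK).image (by fun_prop)).isClosed
  have notMem_dist : r ∈ ((fun p : X × X => dist p.1 p.2) '' K ×ˢ K)ᶜ := by
    rintro ⟨⟨x, y⟩, ⟨hx, hy⟩, hxy⟩
    exact hr x hx y hy hxy
  obtain ⟨η, hη, ball_subset⟩ := Metric.isOpen_iff.1 isClosed_dist.isOpen_compl r notMem_dist
  refine ⟨η, hη, fun x hx y hy => not_lt.1 fun hlt => ?_⟩
  exact ball_subset (mem_ball.2 hlt) ⟨(x, y), ⟨hx, hy⟩, rfl⟩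

lemma exists_isCompact_seq_tendsto_measureReal_compl {X : Type*} [TopologicalSpace X] [T2Space X]
    [MeasurableSpace X] [BorelSpace X] (μ : Measure X) [IsFiniteMeasure μ]
    [μ.InnerRegularCompactLTTop] {E : Set X} (hE : μ Eᶜ = 0) :
    ∃ K : ℕ → Set X, (∀ n, K n ⊆ E) ∧ (∀ n, IsCompact (K n)) ∧
      Tendsto (fun n => μ.real (K n)ᶜ) atTop (𝓝 0) := by
  set A : Set X := (toMeasurable μ Eᶜ)ᶜ
  have measurableSet_A : MeasurableSet A := (measurableSet_toMeasurable _ _).compl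
  have A_subset : A ⊆ E := compl_subset_comm.1 (subset_toMeasurable _ _)
  have measure_compl_A : μ Aᶜ = 0 := by rw [compl_compl, measure_toMeasurable, hE]
  have approx (n : ℕ) : ∃ K ⊆ A, IsCompact K ∧ μ (A \ K) < ENNReal.ofReal (1 / (n + 1)) :=
    measurableSet_A.exists_isCompact_sdiff_lt (measure_ne_top μ A)
      (ENNReal.ofReal_pos.2 Nat.one_div_pos_of_nat).ne'
  choose K K_subset isCompact_K measure_diff using approx
  refine ⟨K, fun n => (K_subset n).trans A_subset, isCompact_K, ?_⟩
  refine squeeze_zero (fun n => measureReal_nonneg) (fun n => ?_)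
    tendsto_one_div_add_atTop_nhds_zero_nat
  refine ENNReal.toReal_le_of_le_ofReal Nat.one_div_pos_of_nat.le ?_
  calc μ (K n)ᶜ ≤ μ (A \ K n ∪ Aᶜ) := by
        refine measure_mono fun x hx => ?_
        by_cases hxA : x ∈ A
        exacts [.inl ⟨hxA, hx⟩, .inr hxA]
    _ ≤ μ (A \ K n) + μ Aᶜ := measure_union_le _ _
    _ ≤ ENNReal.ofReal (1 / (n + 1)) := by
        rw [measure_compl_A, add_zero]; exact (measure_diff n).le

lemma integral_le_of_tendsto_of_nonneg {α : Type*} [MeasurableSpace α] {κ : Measure α}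
    {f : ℕ → α → ℝ} {g : α → ℝ} {B : ℝ} (hf : ∀ n, Integrable (f n) κ) (hf0 : ∀ n, 0 ≤ f n)
    (hB : ∀ n, ∫ x, f n x ∂κ ≤ B) (hg : Integrable g κ)
    (hlim : ∀ x, Tendsto (f · x) atTop (𝓝 (g x))) : ∫ x, g x ∂κ ≤ B := by
  have g_nonneg (x : α) : 0 ≤ g x := ge_of_tendsto' (hlim x) fun n => hf0 n x
  have B_nonneg : 0 ≤ B := (integral_nonneg (hf0 0)).trans (hB 0)
  rw [← ENNReal.ofReal_le_ofReal_iff B_nonneg,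
    ofReal_integral_eq_lintegral_ofReal hg (.of_forall g_nonneg)]
  calc ∫⁻ x, ENNReal.ofReal (g x) ∂κ
      = ∫⁻ x, liminf (fun n => ENNReal.ofReal (f n x)) atTop ∂κ :=
        lintegral_congr fun x => (ENNReal.tendsto_ofReal (hlim x)).liminf_eq.symm
    _ ≤ liminf (fun n => ∫⁻ x, ENNReal.ofReal (f n x) ∂κ) atTop :=
        lintegral_liminf_le' fun n => (hf n).aemeasurable.ennreal_ofReal
    _ ≤ ENNReal.ofReal B := by
        refine liminf_le_of_frequently_le' (.of_forall fun n => ?_)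
        rw [← ofReal_integral_eq_lintegral_ofReal (hf n) (.of_forall (hf0 n))]
        exact ENNReal.ofReal_le_ofReal (hB n)

lemma ae_conv_of_ae_ae {G : Type*} [AddMonoid G] [MeasurableSpace G] [MeasurableAdd₂ G]
    {μ ν : Measure G} [SFinite ν] {p : G → Prop} (hp : MeasurableSet {z | p z})
    (h : ∀ᵐ x ∂μ, ∀ᵐ y ∂ν, p (x + y)) : ∀ᵐ z ∂μ ∗ ν, p z := by
  rw [Measure.conv, ae_map_iff (by fun_prop) hp,
    Measure.ae_prod_iff_ae_ae (p := fun q : G × G => p (q.1 + q.2))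
      (measurable_fst.add measurable_snd hp)]
  exact h

variable {V : Type*} [NormedAddCommGroup V] [InnerProductSpace ℝ V] [MeasurableSpace V]
  [BorelSpace V]

lemma norm_charFun_restrict_sub_le (μ : Measure V) [IsFiniteMeasure μ] {K : Set V}
    (hK : MeasurableSet K) (ξ : V) :
    ‖charFun (μ.restrict K) ξ - charFun μ ξ‖ ≤ μ.real Kᶜ := by
  have integrable_char : Integrable (fun x => Complex.exp ((inner ℝ x ξ : ℝ) * Complex.I)) μ :=
    .of_bound (C := 1) (by fun_prop) (.of_forall fun _ => (Complex.norm_exp_ofReal_mul_I _).le)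
  have sub_eq : charFun (μ.restrict K) ξ - charFun μ ξ = -charFun (μ.restrict Kᶜ) ξ := by
    simp only [charFun_apply]
    rw [← integral_add_compl hK integrable_char, sub_add_cancel_left]
  simpa [sub_eq] using norm_charFun_le (μ := μ.restrict Kᶜ) ξ

lemma tendsto_powerSpectrum_restrict (μ : Measure V) [IsFiniteMeasure μ] {K : ℕ → Set V}
    (hK : ∀ n, MeasurableSet (K n)) (hlim : Tendsto (fun n => μ.real (K n)ᶜ) atTop (𝓝 0)) (ξ : V) :
    Tendsto (fun n => powerSpectrum (μ.restrict (K n)) ξ) atTop (𝓝 (powerSpectrum μ ξ)) := by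
  refine Tendsto.pow (Tendsto.norm ?_) 2
  exact tendsto_iff_norm_sub_tendsto_zero.2 <| squeeze_zero (fun _ => norm_nonneg _)
    (fun n => norm_charFun_restrict_sub_le μ (hK n) ξ) hlim

variable [FiniteDimensional ℝ V]

lemma charFun_uniformSphere (ξ : V) :
    charFun (uniformSphere V) ξ = cosTransform (uniformSphere V) ξ := by
  have charFun_neg_eq : charFun (uniformSphere V) (-ξ) = charFun (uniformSphere V) ξ := by
    have := (measurePreserving_uniformSphere (LinearIsometryEquiv.neg ℝ (E := V))).integral_comp
      (LinearIsometryEquiv.neg ℝ).toHomeomorph.measurableEmbedding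
      fun ω => Complex.exp ((inner ℝ ω ξ : ℝ) * Complex.I)
    simpa [charFun_apply] using this
  rw [charFun_neg] at charFun_neg_eq
  have integrable_char : Integrable (fun ω => Complex.exp ((inner ℝ ω ξ : ℝ) * Complex.I))
      (uniformSphere V) :=
    .of_bound (C := 1) (by fun_prop) (.of_forall fun _ => (Complex.norm_exp_ofReal_mul_I _).le)
  have re_eq : cosTransform (uniformSphere V) ξ = (charFun (uniformSphere V) ξ).re := by
    simpa [cosTransform, charFun_apply, Complex.exp_ofReal_mul_I_re] using
      integral_re integrable_char
  rw [re_eq, Complex.conj_eq_iff_re.1 charFun_neg_eq]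

lemma ae_le_norm_conv_uniformSphere [Nontrivial V] {ν : Measure V} {r η : ℝ} (hr : 0 ≤ r)
    (hν : ∀ᵐ z ∂ν, η ≤ |‖z‖ - r|) :
    ∀ᵐ z ∂ν ∗ (uniformSphere V).map (r • ·), η ≤ ‖z‖ := by
  refine ae_conv_of_ae_ae (measurableSet_le measurable_const measurable_norm) ?_
  filter_upwards [hν] with z hz
  rw [ae_map_iff (by fun_prop) (measurableSet_le measurable_const (by fun_prop))]
  filter_upwards [ae_norm_eq_one_uniformSphere V] with ω hω
  calc η ≤ |‖z‖ - ‖-(r • ω)‖| := by rwa [norm_neg, norm_smul, hω, Real.norm_of_nonneg hr, mul_one]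
    _ ≤ ‖z + r • ω‖ := by simpa using abs_norm_sub_norm_le z (-(r • ω))

lemma ae_le_abs_norm_sub_autocorrelation {μ : Measure V} [SFinite μ] {K : Set V} {r η : ℝ}
    (hμ : ∀ᵐ x ∂μ, x ∈ K) (hη : ∀ x ∈ K, ∀ y ∈ K, η ≤ |dist x y - r|) :
    ∀ᵐ z ∂autocorrelation μ, η ≤ |‖z‖ - r| := by
  refine ae_conv_of_ae_ae (measurableSet_le measurable_const (by fun_prop)) ?_
  filter_upwards [hμ] with x hx
  rw [ae_map_iff (by fun_prop) (measurableSet_le measurable_const (by fun_prop))]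
  filter_upwards [hμ] with y hy
  simpa [dist_eq_norm, sub_eq_add_neg] using hη x hx y hy

lemma integral_powerSpectrum_mul_cosTransform_eq_zero [Nontrivial V] (μ : Measure V)
    [IsFiniteMeasure μ] {K : Set V} (hK : IsCompact K) (hμ : ∀ᵐ x ∂μ, x ∈ K) {r : ℝ} (hr : 0 ≤ r)
    (hrK : ∀ x ∈ K, ∀ y ∈ K, dist x y ≠ r)
    (hint : Integrable fun ξ => powerSpectrum μ ξ * cosTransform (uniformSphere V) (r • ξ)) :
    ∫ ξ, powerSpectrum μ ξ * cosTransform (uniformSphere V) (r • ξ) = 0 := by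
  obtain ⟨η, hη, gap⟩ := exists_pos_forall_le_abs_dist_sub hK hrK
  set ν : Measure V := autocorrelation μ ∗ (uniformSphere V).map (r • ·)
  have charFun_ν : charFun ν =
      fun ξ => ((powerSpectrum μ ξ * cosTransform (uniformSphere V) (r • ξ) : ℝ) : ℂ) := by
    ext ξ
    rw [charFun_conv, charFun_autocorrelation, charFun_map_smul, charFun_uniformSphere,
      Complex.ofReal_mul]
  have ae_ν : ∀ᵐ z ∂ν, η ≤ ‖z‖ :=
    ae_le_norm_conv_uniformSphere hr (ae_le_abs_norm_sub_autocorrelation hμ gap)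
  have integral_charFun_ν := integral_charFun_eq_zero ν (charFun_ν ▸ hint.ofReal) hη ae_ν
  rw [charFun_ν, integral_complex_ofReal] at integral_charFun_ν
  exact_mod_cast integral_charFun_ν

lemma integrable_powerSpectrum_mul_of_abs_le {μ : Measure V} [IsFiniteMeasure μ] {k : V → ℝ}
    {a C : ℝ} (hk : Continuous k) (hkw : ∀ ξ, |k ξ| ≤ C * besselWeight a ξ)
    (hint : Integrable fun ξ => powerSpectrum μ ξ * besselWeight a ξ) :
    Integrable fun ξ => powerSpectrum μ ξ * k ξ := by
  refine (hint.const_mul C).mono' ((continuous_powerSpectrum μ).mul hk).aestronglyMeasurable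
    (.of_forall fun ξ => ?_)
  calc ‖powerSpectrum μ ξ * k ξ‖ = powerSpectrum μ ξ * |k ξ| := by
        rw [Real.norm_eq_abs, abs_mul, abs_of_nonneg (powerSpectrum_nonneg μ ξ)]
    _ ≤ powerSpectrum μ ξ * (C * besselWeight a ξ) :=
        mul_le_mul_of_nonneg_left (hkw ξ) (powerSpectrum_nonneg μ ξ)
    _ = C * (powerSpectrum μ ξ * besselWeight a ξ) := by ring

-- Fatou's lemma applied to `powerSpectrum (μ' n) * (k + C * besselWeight a)`.
lemma integral_powerSpectrum_mul_nonpos_of_tendsto {μ : Measure V} [IsFiniteMeasure μ]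
    {μ' : ℕ → Measure V} [∀ n, IsFiniteMeasure (μ' n)] (hle : ∀ n, μ' n ≤ μ)
    (hlim : ∀ ξ, Tendsto (fun n => powerSpectrum (μ' n) ξ) atTop (𝓝 (powerSpectrum μ ξ)))
    {k : V → ℝ} {a C : ℝ} (ha : 0 < a) (hC : 0 ≤ C) (hk : Continuous k)
    (hkw : ∀ ξ, |k ξ| ≤ C * besselWeight a ξ)
    (hint : Integrable fun ξ => powerSpectrum μ ξ * besselWeight a ξ)
    (hk0 : ∀ n, ∫ ξ, powerSpectrum (μ' n) ξ * k ξ ≤ 0) :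
    ∫ ξ, powerSpectrum μ ξ * k ξ ≤ 0 := by
  have hint' (n : ℕ) := integrable_powerSpectrum_mul_besselWeight_of_le (hle n) ha hint
  have integral_shift {ν : Measure V} [IsFiniteMeasure ν]
      (hν : Integrable fun ξ => powerSpectrum ν ξ * besselWeight a ξ) :
      Integrable (fun ξ => powerSpectrum ν ξ * (k ξ + C * besselWeight a ξ)) ∧
      ∫ ξ, powerSpectrum ν ξ * (k ξ + C * besselWeight a ξ) =
        (∫ ξ, powerSpectrum ν ξ * k ξ) + C * ∫ ξ, powerSpectrum ν ξ * besselWeight a ξ := by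
    have hνk := integrable_powerSpectrum_mul_of_abs_le hk hkw hν
    have expand (ξ : V) : powerSpectrum ν ξ * (k ξ + C * besselWeight a ξ) =
        powerSpectrum ν ξ * k ξ + C * (powerSpectrum ν ξ * besselWeight a ξ) := by ring
    simp only [expand]
    exact ⟨hνk.add (hν.const_mul C), by
      rw [integral_add hνk (hν.const_mul C), integral_const_mul]⟩
  have fatou : ∫ ξ, powerSpectrum μ ξ * (k ξ + C * besselWeight a ξ) ≤
      C * ∫ ξ, powerSpectrum μ ξ * besselWeight a ξ := by
    refine integral_le_of_tendsto_of_nonneg (fun n => (integral_shift (hint' n)).1)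
      (fun n ξ => ?_) (fun n => ?_) (integral_shift hint).1 (fun ξ => (hlim ξ).mul_const _)
    · exact mul_nonneg (powerSpectrum_nonneg _ ξ) (by linarith [(abs_le.1 (hkw ξ)).1])
    · rw [(integral_shift (hint' n)).2]
      have := integral_powerSpectrum_mul_besselWeight_mono (hle n) ha hint
      linarith [hk0 n, mul_le_mul_of_nonneg_left this hC]
  rw [(integral_shift hint).2] at fatou
  linarith

theorem integral_powerSpectrum_mul_cosTransform_nonpos [Nontrivial V] (μ : Measure V)
    [IsFiniteMeasure μ] {E : Set V} (hE : μ Eᶜ = 0) {r : ℝ} (hr : 0 ≤ r)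
    (hrE : ∀ x ∈ E, ∀ y ∈ E, dist x y ≠ r) {a C : ℝ} (ha : 0 < a) (hC : 0 ≤ C)
    (hσ : ∀ ξ, |cosTransform (uniformSphere V) (r • ξ)| ≤ C * besselWeight a ξ)
    (hint : Integrable fun ξ => powerSpectrum μ ξ * besselWeight a ξ) :
    ∫ ξ, powerSpectrum μ ξ * cosTransform (uniformSphere V) (r • ξ) ≤ 0 := by
  obtain ⟨K, K_subset, isCompact_K, tendsto_K⟩ :=
    exists_isCompact_seq_tendsto_measureReal_compl μ hE
  have continuous_k : Continuous fun ξ => cosTransform (uniformSphere V) (r • ξ) :=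
    (continuous_cosTransform _).comp (continuous_const_smul r)
  refine integral_powerSpectrum_mul_nonpos_of_tendsto (μ' := fun n => μ.restrict (K n))
    (fun n => Measure.restrict_le_self)
    (tendsto_powerSpectrum_restrict μ (fun n => (isCompact_K n).measurableSet) tendsto_K)
    ha hC continuous_k hσ hint fun n => le_of_eq ?_
  exact integral_powerSpectrum_mul_cosTransform_eq_zero _ (isCompact_K n)
    (ae_restrict_mem (isCompact_K n).measurableSet) hr
    (fun x hx y hy => hrE x (K_subset n hx) y (K_subset n hy))
    (integrable_powerSpectrum_mul_of_abs_le continuous_k hσ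
      (integrable_powerSpectrum_mul_besselWeight_of_le Measure.restrict_le_self ha hint))

end MissingDistance

section SpectralTail

lemma lintegral_Ioi_mul_rpow_neg_sub_one {a s : ℝ} (ha : 0 < a) (hs : 0 < s) :
    ∫⁻ t in Ioi s, ENNReal.ofReal (a * t ^ (-a - 1)) = ENNReal.ofReal (s ^ (-a)) := by
  rw [← ofReal_integral_eq_lintegral_ofReal
    ((integrableOn_Ioi_rpow_of_lt (by linarith) hs).const_mul a), integral_const_mul,
    integral_Ioi_rpow_of_lt (by linarith) hs, sub_add_cancel]
  · congr 1
    field_simp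
  · filter_upwards [ae_restrict_mem measurableSet_Ioi] with t (ht : s < t)
    have t_pos : 0 < t := hs.trans ht
    positivity

lemma lintegral_lintegral_Ici {α : Type*} [MeasurableSpace α] {κ : Measure α} [SFinite κ]
    {g : α → ℝ} (hg : Measurable g) {f : ℝ → ℝ≥0∞} (hf : Measurable f) :
    ∫⁻ x, (∫⁻ t in Ici (g x), f t) ∂κ = ∫⁻ t, f t * κ {x | g x ≤ t} := by
  have measurableSet_epigraph : MeasurableSet {p : α × ℝ | g p.1 ≤ p.2} :=
    measurableSet_le (by fun_prop) (by fun_prop)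
  calc ∫⁻ x, (∫⁻ t in Ici (g x), f t) ∂κ
      = ∫⁻ x, (∫⁻ t, {p : α × ℝ | g p.1 ≤ p.2}.indicator (fun p => f p.2) (x, t)) ∂κ :=
        lintegral_congr fun x => (lintegral_indicator measurableSet_Ici _).symm
    _ = ∫⁻ t, ∫⁻ x, {p : α × ℝ | g p.1 ≤ p.2}.indicator (fun p => f p.2) (x, t) ∂κ :=
        lintegral_lintegral_swap
          (Measurable.indicator (by fun_prop) measurableSet_epigraph).aemeasurable
    _ = ∫⁻ t, f t * κ {x | g x ≤ t} :=
        lintegral_congr fun t =>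
          lintegral_indicator_const (measurableSet_le hg measurable_const) (f t)

-- Layer cake: `g ^ (-a)` is the integral of `a * t ^ (-a - 1)` over `t > g`.
lemma lintegral_rpow_neg_tail_le {α : Type*} [MeasurableSpace α] {κ : Measure α} [SFinite κ]
    {g : α → ℝ} (hg : Measurable g) {a c B D : ℝ} (ha : 0 < a) (hca : c < a) (hB : 0 < B)
    (hκ : ∀ t, B < t → κ {x | g x ≤ t} ≤ ENNReal.ofReal (D * t ^ c)) :
    ∫⁻ x in {x | B < g x}, ENNReal.ofReal (g x ^ (-a)) ∂κ ≤
      ENNReal.ofReal (a / (a - c) * D * B ^ (-(a - c))) := by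
  have slice (t : ℝ) : ENNReal.ofReal (a * t ^ (-a - 1)) *
        κ.restrict {x | B < g x} {x | g x ≤ t} ≤
      (Ioi B).indicator (fun s => ENNReal.ofReal (a / (a - c) * D) *
        ENNReal.ofReal ((a - c) * s ^ (-(a - c) - 1))) t := by
    rw [Measure.restrict_apply (measurableSet_le hg measurable_const)]
    rcases le_or_gt t B with ht | ht
    · have disjoint : {x | g x ≤ t} ∩ {x | B < g x} = ∅ :=
        eq_empty_of_forall_notMem fun x hx => (hx.1.trans ht).not_gt hx.2
      simp [disjoint]
    · have t_pos : 0 < t := hB.trans ht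
      have a_sub_c_pos : 0 < a - c := sub_pos.2 hca
      rw [indicator_of_mem (mem_Ioi.2 ht)]
      calc _ ≤ ENNReal.ofReal (a * t ^ (-a - 1)) * ENNReal.ofReal (D * t ^ c) := by
            gcongr
            exact (measure_mono inter_subset_left).trans (hκ t ht)
        _ = _ := by
            rw [← ENNReal.ofReal_mul (by positivity), ← ENNReal.ofReal_mul' (by positivity),
              show -(a - c) - 1 = -a - 1 + c by ring, Real.rpow_add t_pos]
            congr 1
            field_simp
  calc _ = ∫⁻ x in {x | B < g x}, (∫⁻ t in Ici (g x), ENNReal.ofReal (a * t ^ (-a - 1))) ∂κ :=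
        setLIntegral_congr_fun (measurableSet_lt measurable_const hg) fun x (hx : B < g x) => by
          rw [setLIntegral_congr Ioi_ae_eq_Ici.symm,
            lintegral_Ioi_mul_rpow_neg_sub_one ha (hB.trans hx)]
    _ ≤ ∫⁻ t in Ioi B, ENNReal.ofReal (a / (a - c) * D) *
          ENNReal.ofReal ((a - c) * t ^ (-(a - c) - 1)) := by
        rw [lintegral_lintegral_Ici hg (by fun_prop), ← lintegral_indicator measurableSet_Ioi]
        exact lintegral_mono slice
    _ = ENNReal.ofReal (a / (a - c) * D * B ^ (-(a - c))) := by
        rw [lintegral_const_mul' _ _ ENNReal.ofReal_ne_top,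
          lintegral_Ioi_mul_rpow_neg_sub_one (sub_pos.2 hca) hB,
          ← ENNReal.ofReal_mul' (by positivity)]

variable {V : Type*} [NormedAddCommGroup V] [InnerProductSpace ℝ V] [FiniteDimensional ℝ V]
  [MeasurableSpace V] [BorelSpace V]

/-- The partial `L²` Fourier integral `∫_{‖ξ‖ ≤ T} |μ̂(ξ)|² dξ` of a measure on a
Euclidean space. -/
def spectralMass (μ : Measure V) (T : ℝ) : ℝ := ∫ ξ in closedBall 0 T, powerSpectrum μ ξ

lemma spectralMass_nonneg (μ : Measure V) (T : ℝ) : 0 ≤ spectralMass μ T :=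
  integral_nonneg (powerSpectrum_nonneg μ)

variable (μ : Measure V) [IsFiniteMeasure μ]

lemma integrableOn_powerSpectrum_closedBall (T : ℝ) :
    IntegrableOn (powerSpectrum μ) (closedBall 0 T) :=
  (continuous_powerSpectrum μ).continuousOn.integrableOn_compact (isCompact_closedBall 0 T)

lemma monotone_spectralMass : Monotone (spectralMass μ) := fun _ T hT =>
  setIntegral_mono_set (integrableOn_powerSpectrum_closedBall μ T)
    (.of_forall (powerSpectrum_nonneg μ)) (closedBall_subset_closedBall hT).eventuallyLE

lemma ofReal_spectralMass (T : ℝ) : ENNReal.ofReal (spectralMass μ T) =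
    ∫⁻ ξ in closedBall 0 T, ENNReal.ofReal (powerSpectrum μ ξ) :=
  ofReal_integral_eq_lintegral_ofReal (integrableOn_powerSpectrum_closedBall μ T)
    (.of_forall (powerSpectrum_nonneg μ))

variable {μ} {a c B D : ℝ}

lemma lintegral_powerSpectrum_mul_rpow_neg_tail_le (ha : 0 < a) (hca : c < a) (hB : 0 < B)
    (hμ : ∀ t, B < t → spectralMass μ t ≤ D * t ^ c) :
    ∫⁻ ξ in (closedBall (0 : V) B)ᶜ, ENNReal.ofReal (powerSpectrum μ ξ * ‖ξ‖ ^ (-a)) ≤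
      ENNReal.ofReal (a / (a - c) * D * B ^ (-(a - c))) := by
  have measurable_density : Measurable fun ξ => ENNReal.ofReal (powerSpectrum μ ξ) :=
    (continuous_powerSpectrum μ).measurable.ennreal_ofReal
  have compl_eq : (closedBall (0 : V) B)ᶜ = {ξ | B < ‖ξ‖} := by ext; simp
  have measurableSet_tail : MeasurableSet {ξ : V | B < ‖ξ‖} :=
    measurableSet_lt measurable_const measurable_norm
  have tail := lintegral_rpow_neg_tail_le (g := fun ξ : V => ‖ξ‖)
    (κ := volume.withDensity fun ξ => ENNReal.ofReal (powerSpectrum μ ξ)) measurable_norm ha hca hB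
    fun t ht => by
      rw [show {ξ : V | ‖ξ‖ ≤ t} = closedBall 0 t by ext; simp,
        withDensity_apply _ measurableSet_closedBall, ← ofReal_spectralMass]
      exact ENNReal.ofReal_le_ofReal (hμ t ht)
  rw [setLIntegral_withDensity_eq_setLIntegral_mul _ measurable_density (by fun_prop)
    measurableSet_tail] at tail
  simpa only [compl_eq, ENNReal.ofReal_mul (powerSpectrum_nonneg μ _), Pi.mul_apply] using tail

end SpectralTail

section SingleScale

lemma mul_inv_rpow_neg_mul_rpow_neg_mul_rpow_neg {δ R : ℝ} (hδ : 0 < δ) (hR : 0 < R) (a c : ℝ) :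
    (δ * R⁻¹) ^ (-a) * (R ^ (-c) * (δ⁻¹ ^ 2 * R) ^ (-(a - c))) = δ ^ (a - 2 * c) := by
  have expand_δ : ((δ ^ 2)⁻¹) ^ (-(a - c)) = δ ^ (2 * (a - c)) := by
    rw [← Real.rpow_natCast, ← Real.rpow_neg hδ.le, ← Real.rpow_mul hδ.le]
    congr 1
    push_cast
    ring
  have cancel_R : (R⁻¹) ^ (-a) * (R ^ (-c) * R ^ (-(a - c))) = 1 := by
    rw [Real.inv_rpow hR.le, ← Real.rpow_neg hR.le, ← Real.rpow_add hR, ← Real.rpow_add hR]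
    ring_nf
    exact Real.rpow_zero R
  calc _ = δ ^ (-a) * δ ^ (2 * (a - c)) *
        ((R⁻¹) ^ (-a) * (R ^ (-c) * R ^ (-(a - c)))) := by
        rw [Real.mul_rpow hδ.le (by positivity), Real.mul_rpow (by positivity) hR.le, inv_pow,
          expand_δ]
        ring
    _ = δ ^ (a - 2 * c) := by
        rw [cancel_R, mul_one, ← Real.rpow_add hδ]
        ring_nf

variable {V : Type*} [NormedAddCommGroup V] [InnerProductSpace ℝ V] [MeasurableSpace V]
  {a c B D : ℝ}

lemma abs_cosTransform_smul_le {ν : Measure V} {C : ℝ}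
    (hC : ∀ ξ ≠ 0, |cosTransform ν ξ| ≤ C * ‖ξ‖ ^ (-a)) {r : ℝ} (hr : 0 < r) {ξ : V} (hξ : ξ ≠ 0) :
    |cosTransform ν (r • ξ)| ≤ C * r ^ (-a) * ‖ξ‖ ^ (-a) := by
  refine (hC _ (smul_ne_zero hr.ne' hξ)).trans_eq ?_
  rw [norm_smul, Real.norm_of_nonneg hr.le, Real.mul_rpow hr.le (norm_nonneg ξ), mul_assoc]

lemma exists_abs_cosTransform_smul_le_besselWeight {ν : Measure V} [IsProbabilityMeasure ν]
    (ha : 0 ≤ a) {A r : ℝ} (hA : ∀ ξ ≠ 0, |cosTransform ν (r • ξ)| ≤ A * ‖ξ‖ ^ (-a)) :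
    ∃ C, 0 ≤ C ∧ ∀ ξ, |cosTransform ν (r • ξ)| ≤ C * besselWeight a ξ := by
  refine ⟨max 1 A * 2 ^ (a / 2), by positivity, fun ξ => ?_⟩
  rcases eq_or_ne ξ 0 with rfl | hξ
  · calc |cosTransform ν (r • (0 : V))| ≤ 1 := abs_cosTransform_le_one ν _
      _ ≤ max 1 A * 2 ^ (a / 2) :=
          one_le_mul_of_one_le_of_one_le (le_max_left _ _)
            (Real.one_le_rpow one_le_two (by linarith))
      _ = max 1 A * 2 ^ (a / 2) * besselWeight a (0 : V) := by simp [besselWeight]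
  · calc |cosTransform ν (r • ξ)| ≤ min (max 1 A) (max 1 A * ‖ξ‖ ^ (-a)) := by
          refine le_min ((abs_cosTransform_le_one ν _).trans (le_max_left _ _)) ?_
          exact (hA ξ hξ).trans (by gcongr; exact le_max_right _ _)
      _ = max 1 A * min 1 (‖ξ‖ ^ (-a)) := by
          rw [mul_min_of_nonneg _ _ (by positivity), mul_one]
      _ ≤ max 1 A * 2 ^ (a / 2) * besselWeight a ξ := by
          rw [mul_assoc]
          gcongr
          exact min_one_rpow_neg_le_besselWeight ha hξ

variable [FiniteDimensional ℝ V] [BorelSpace V] {μ : Measure V} [IsFiniteMeasure μ]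

lemma integrable_powerSpectrum_mul_besselWeight_of_spectralMass_le (ha : 0 < a) (hca : c < a)
    (hB : 0 < B) (hμ : ∀ t, B < t → spectralMass μ t ≤ D * t ^ c) :
    Integrable fun ξ => powerSpectrum μ ξ * besselWeight a ξ := by
  rw [← lintegral_ofReal_ne_top_iff_integrable
    (aestronglyMeasurable_powerSpectrum_mul_besselWeight μ a)
    (.of_forall (powerSpectrum_mul_besselWeight_nonneg μ a)),
    ← lintegral_add_compl _ (measurableSet_closedBall (x := (0 : V)) (ε := B))]
  refine ENNReal.add_ne_top.2 ⟨?_, ?_⟩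
  · refine ne_top_of_le_ne_top (ofReal_spectralMass μ B ▸ ENNReal.ofReal_ne_top) ?_
    exact lintegral_mono fun ξ => ENNReal.ofReal_le_ofReal <|
      mul_le_of_le_one_right (powerSpectrum_nonneg μ ξ) (besselWeight_le_one ha.le ξ)
  · refine ne_top_of_le_ne_top ENNReal.ofReal_ne_top
      (le_trans ?_ (lintegral_powerSpectrum_mul_rpow_neg_tail_le ha hca hB hμ))
    refine setLIntegral_mono' measurableSet_closedBall.compl fun ξ hξ => ?_
    have ξ_ne_zero : ξ ≠ 0 := by rintro rfl; simp [hB.le] at hξ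
    gcongr
    exacts [powerSpectrum_nonneg μ ξ, besselWeight_le_rpow_neg ha.le ξ_ne_zero]

lemma abs_setIntegral_powerSpectrum_mul_tail_le (ha : 0 < a) (hca : c < a) (hB : 0 < B)
    (hμ : ∀ t, B < t → spectralMass μ t ≤ D * t ^ c) (hD : 0 ≤ D) {k : V → ℝ} {A : ℝ}
    (hA : 0 ≤ A) (hk : ∀ ξ, B < ‖ξ‖ → |k ξ| ≤ A * ‖ξ‖ ^ (-a)) :
    |∫ ξ in (closedBall 0 B)ᶜ, powerSpectrum μ ξ * k ξ| ≤
      A * (a / (a - c) * D * B ^ (-(a - c))) := by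
  have : 0 < a - c := sub_pos.2 hca
  refine (norm_integral_le_lintegral_norm (fun ξ => powerSpectrum μ ξ * k ξ)).trans
    (ENNReal.toReal_le_of_le_ofReal (by positivity) ?_)
  rw [ENNReal.ofReal_mul hA]
  grw [← lintegral_powerSpectrum_mul_rpow_neg_tail_le ha hca hB hμ]
  rw [← lintegral_const_mul' _ _ ENNReal.ofReal_ne_top]
  refine setLIntegral_mono' measurableSet_closedBall.compl fun ξ hξ => ?_
  rw [← ENNReal.ofReal_mul hA, norm_mul, Real.norm_of_nonneg (powerSpectrum_nonneg μ ξ),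
    mul_left_comm]
  exact ENNReal.ofReal_le_ofReal
    (mul_le_mul_of_nonneg_left (hk ξ (by simpa using hξ)) (powerSpectrum_nonneg μ ξ))

lemma le_setIntegral_powerSpectrum_mul_closedBall {k : V → ℝ} (hk : Continuous k) {b m R : ℝ}
    (hRB : R ≤ B) (hkb : ∀ ξ, -b ≤ k ξ) (hkm : ∀ ξ, ‖ξ‖ ≤ R → m ≤ k ξ) :
    (m + b) * spectralMass μ R - b * spectralMass μ B ≤
      ∫ ξ in closedBall 0 B, powerSpectrum μ ξ * k ξ := by
  have integrableOn_mul {f : V → ℝ} (hf : Continuous f) (T : ℝ) :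
      IntegrableOn (fun ξ => powerSpectrum μ ξ * f ξ) (closedBall 0 T) :=
    ((continuous_powerSpectrum μ).mul hf).continuousOn.integrableOn_compact
      (isCompact_closedBall 0 T)
  have continuous_shift : Continuous fun ξ => k ξ + b := hk.add continuous_const
  have split : ∫ ξ in closedBall 0 B, powerSpectrum μ ξ * (k ξ + b) =
      (∫ ξ in closedBall 0 B, powerSpectrum μ ξ * k ξ) + b * spectralMass μ B := by
    simp only [mul_add]
    rw [integral_add (integrableOn_mul hk B) (integrableOn_mul continuous_const B),
      integral_mul_const, mul_comm b, spectralMass]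
  suffices (m + b) * spectralMass μ R ≤
      ∫ ξ in closedBall 0 B, powerSpectrum μ ξ * (k ξ + b) by linarith
  calc (m + b) * spectralMass μ R = ∫ ξ in closedBall 0 R, powerSpectrum μ ξ * (m + b) := by
        rw [integral_mul_const, mul_comm, spectralMass]
    _ ≤ ∫ ξ in closedBall 0 R, powerSpectrum μ ξ * (k ξ + b) := by
        refine setIntegral_mono_on (integrableOn_mul continuous_const R)
          (integrableOn_mul continuous_shift R) measurableSet_closedBall fun ξ hξ => ?_
        gcongr
        exacts [powerSpectrum_nonneg μ ξ, hkm ξ (by simpa using hξ)]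
    _ ≤ ∫ ξ in closedBall 0 B, powerSpectrum μ ξ * (k ξ + b) :=
        setIntegral_mono_set (integrableOn_mul continuous_shift B)
          (.of_forall fun ξ => mul_nonneg (powerSpectrum_nonneg μ ξ) (by linarith [hkb ξ]))
          (closedBall_subset_closedBall hRB).eventuallyLE

lemma add_mul_spectralMass_le_of_dist_ne [Nontrivial V] {C b r R : ℝ}
    (hdecay : ∀ ξ ≠ 0, |cosTransform (uniformSphere V) ξ| ≤ C * ‖ξ‖ ^ (-a)) (hC : 0 ≤ C)
    (hlower : ∀ ξ, -b ≤ cosTransform (uniformSphere V) ξ) (ha : 0 < a) (hca : c < a)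
    {E : Set V} (hE : μ Eᶜ = 0) (hr : 0 < r) (hrE : ∀ x ∈ E, ∀ y ∈ E, dist x y ≠ r)
    (hB : 0 < B) (hRB : R ≤ B) (hD : 0 ≤ D) (hμ : ∀ t, B < t → spectralMass μ t ≤ D * t ^ c) :
    (1 - (r * R) ^ 2 / 2 + b) * spectralMass μ R ≤
      b * spectralMass μ B + C * r ^ (-a) * (a / (a - c) * D * B ^ (-(a - c))) := by
  set k : V → ℝ := fun ξ => cosTransform (uniformSphere V) (r • ξ)
  have continuous_k : Continuous k := (continuous_cosTransform _).comp (continuous_const_smul r)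
  have k_decay (ξ : V) (hξ : ξ ≠ 0) : |k ξ| ≤ C * r ^ (-a) * ‖ξ‖ ^ (-a) :=
    abs_cosTransform_smul_le hdecay hr hξ
  obtain ⟨C', hC', k_le⟩ := exists_abs_cosTransform_smul_le_besselWeight ha.le k_decay
  have integrable_bessel :=
    integrable_powerSpectrum_mul_besselWeight_of_spectralMass_le ha hca hB hμ
  have integral_nonpos : ∫ ξ, powerSpectrum μ ξ * k ξ ≤ 0 :=
    integral_powerSpectrum_mul_cosTransform_nonpos μ hE hr.le hrE ha hC' k_le integrable_bessel
  rw [← integral_add_compl (measurableSet_closedBall (x := (0 : V)) (ε := B))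
    (integrable_powerSpectrum_mul_of_abs_le continuous_k k_le integrable_bessel)] at integral_nonpos
  have k_near_zero (ξ : V) (hξ : ‖ξ‖ ≤ R) : 1 - (r * R) ^ 2 / 2 ≤ k ξ := by
    calc 1 - (r * R) ^ 2 / 2 ≤ 1 - ‖r • ξ‖ ^ 2 / 2 := by
          rw [norm_smul, Real.norm_of_nonneg hr.le]
          gcongr
      _ ≤ k ξ := one_sub_sq_norm_div_two_le_cosTransform ae_norm_le_one_uniformSphere (r • ξ)
  have main := le_setIntegral_powerSpectrum_mul_closedBall (μ := μ) continuous_k hRB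
    (fun ξ => hlower _) k_near_zero
  have tail := abs_setIntegral_powerSpectrum_mul_tail_le ha hca hB hμ hD
    (by positivity : 0 ≤ C * r ^ (-a)) fun ξ hξ => k_decay ξ (norm_pos_iff.1 (hB.trans hξ))
  linarith [(abs_le.1 tail).1]

theorem mul_spectralMass_le_of_dist_ne [Nontrivial V] {C b δ R : ℝ}
    (hdecay : ∀ ξ ≠ 0, |cosTransform (uniformSphere V) ξ| ≤ C * ‖ξ‖ ^ (-a)) (hC : 0 ≤ C)
    (hlower : ∀ ξ, -b ≤ cosTransform (uniformSphere V) ξ) (ha : 0 < a) (hca : c < a)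
    {E : Set V} (hE : μ Eᶜ = 0) (hδ : 0 < δ) (hδ1 : δ ≤ 1) (hR : 0 < R)
    (hμ : ∀ t, δ⁻¹ ^ 2 * R < t → spectralMass μ t ≤ (t / R) ^ c * spectralMass μ R)
    (hdist : ∀ x ∈ E, ∀ y ∈ E, dist x y ≠ δ * R⁻¹) :
    (1 - δ ^ 2 / 2 - C * (a / (a - c)) * δ ^ (a - 2 * c)) * spectralMass μ R ≤
      b * (spectralMass μ (δ⁻¹ ^ 2 * R) - spectralMass μ R) := by
  have B_pos : 0 < δ⁻¹ ^ 2 * R := by positivity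
  have R_le_B : R ≤ δ⁻¹ ^ 2 * R :=
    le_mul_of_one_le_left hR.le (one_le_pow₀ (one_le_inv₀ hδ |>.2 hδ1))
  have growth (t : ℝ) (ht : δ⁻¹ ^ 2 * R < t) :
      spectralMass μ t ≤ R ^ (-c) * spectralMass μ R * t ^ c := by
    refine (hμ t ht).trans_eq ?_
    rw [Real.div_rpow (B_pos.trans ht).le hR.le, Real.rpow_neg hR.le]
    ring
  have scale_ineq := add_mul_spectralMass_le_of_dist_ne hdecay hC hlower ha hca hE
    (by positivity : 0 < δ * R⁻¹) hdist B_pos R_le_B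
    (mul_nonneg (by positivity) (spectralMass_nonneg μ R)) growth
  have error_eq : C * (δ * R⁻¹) ^ (-a) *
        (a / (a - c) * (R ^ (-c) * spectralMass μ R) * (δ⁻¹ ^ 2 * R) ^ (-(a - c))) =
      C * (a / (a - c)) * δ ^ (a - 2 * c) * spectralMass μ R := by
    rw [← mul_inv_rpow_neg_mul_rpow_neg_mul_rpow_neg hδ hR]
    ring
  rw [error_eq, inv_mul_cancel_right₀ hR.ne'] at scale_ineq
  linarith

end SingleScale

section SumOverScales

lemma sum_range_sub_le_of_le_succ {F G : ℕ → ℝ} {n : ℕ} (hF : 0 ≤ F 0)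
    (h : ∀ j < n, G j ≤ F (j + 1)) : ∑ j ∈ Finset.range (n + 1), (G j - F j) ≤ G n := by
  induction n with
  | zero => simpa using hF
  | succ n ih =>
    rw [Finset.sum_range_succ]
    linarith [ih fun j hj => h j (by omega), h n (by omega)]

lemma exists_pos_forall_lt_sq_add_rpow_lt (Q T : ℝ) {s ε : ℝ} (hs : 0 < s) (hε : 0 < ε) :
    ∃ δ₀, 0 < δ₀ ∧ ∀ δ, 0 < δ → δ < δ₀ →
      δ ≤ 1 ∧ T ≤ δ⁻¹ ^ 2 ∧ δ ^ 2 / 2 + Q * δ ^ s < ε := by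
  have tendsto_error : Tendsto (fun δ : ℝ => δ ^ 2 / 2 + Q * δ ^ s) (𝓝[>] 0) (𝓝 0) := by
    have continuous_error : Continuous fun δ : ℝ => δ ^ 2 / 2 + Q * δ ^ s := by
      have := Real.continuous_rpow_const hs.le
      fun_prop
    simpa [Real.zero_rpow hs.ne'] using (continuous_error.tendsto 0).mono_left nhdsWithin_le_nhds
  have tendsto_inv_sq : Tendsto (fun δ : ℝ => δ⁻¹ ^ 2) (𝓝[>] 0) atTop :=
    (tendsto_pow_atTop two_ne_zero).comp tendsto_inv_nhdsGT_zero
  have eventually_le_one : ∀ᶠ δ : ℝ in 𝓝[>] 0, δ ≤ 1 :=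
    eventually_nhdsWithin_of_eventually_nhds (eventually_le_nhds one_pos)
  obtain ⟨δ₀, hδ₀, Ioo_subset⟩ := mem_nhdsGT_iff_exists_Ioo_subset.1 <|
    eventually_le_one.and <| (tendsto_inv_sq.eventually_ge_atTop T).and <|
      tendsto_error.eventually (eventually_lt_nhds hε)
  exact ⟨δ₀, hδ₀, fun δ hδ hδ₀ => Ioo_subset ⟨hδ, hδ₀⟩⟩

variable {V : Type*} [NormedAddCommGroup V] [InnerProductSpace ℝ V] [FiniteDimensional ℝ V]
  [MeasurableSpace V] [BorelSpace V] {c T₀ : ℝ}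

lemma exists_pos_forall_two_mul_spectralMass_le (hV : 2 ≤ Module.finrank ℝ V)
    (hc : c < ((Module.finrank ℝ V : ℝ) - 1) / 4) (hT₀ : 0 < T₀) :
    ∃ δ₀, 0 < δ₀ ∧ ∀ (μ : Measure V) [IsFiniteMeasure μ] (E : Set V), μ Eᶜ = 0 →
      (∀ T₁ T₂ : ℝ, T₀ ≤ T₁ → T₀ ≤ T₂ →
        spectralMass μ (T₁ * T₂) ≤ T₁ ^ c * spectralMass μ T₂) →
      ∀ δ, 0 < δ → δ < δ₀ → ∀ R, T₀ < R → (∀ x ∈ E, ∀ y ∈ E, dist x y ≠ δ * R⁻¹) →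
        2 * spectralMass μ R ≤ spectralMass μ (δ⁻¹ ^ 2 * R) - spectralMass μ R := by
  have : Nontrivial V := Module.nontrivial_of_finrank_pos (R := ℝ) (by omega)
  obtain ⟨b, hb, hb_lt, hlower⟩ := exists_lt_half_forall_neg_le_cosTransform_uniformSphere hV
  obtain ⟨C, hC, hdecay⟩ := exists_forall_abs_cosTransform_uniformSphere_le V
  set a : ℝ := ((Module.finrank ℝ V : ℝ) - 1) / 2
  have ha : 0 < a := by
    have : (2 : ℝ) ≤ Module.finrank ℝ V := mod_cast hV
    simp only [a]
    linarith
  have two_mul_c_lt : 2 * c < a := by simp only [a]; linarith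
  obtain ⟨δ₀, hδ₀, small⟩ := exists_pos_forall_lt_sq_add_rpow_lt (C * (a / (a - c))) T₀
    (sub_pos.2 two_mul_c_lt) (by linarith : 0 < 1 - 2 * b)
  refine ⟨δ₀, hδ₀, fun μ _ E hE hgrowth δ hδ hδ_lt R hR hdist => ?_⟩
  obtain ⟨hδ1, hTδ, error_lt⟩ := small δ hδ hδ_lt
  have R_pos : 0 < R := hT₀.trans hR
  have growth (t : ℝ) (ht : δ⁻¹ ^ 2 * R < t) :
      spectralMass μ t ≤ (t / R) ^ c * spectralMass μ R := by
    have := hgrowth (t / R) R (hTδ.trans ((lt_div_iff₀ R_pos).2 ht).le) hR.le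
    rwa [div_mul_cancel₀ t R_pos.ne'] at this
  refine le_of_mul_le_mul_left ?_ hb
  calc b * (2 * spectralMass μ R) = 2 * b * spectralMass μ R := by ring
    _ ≤ (1 - δ ^ 2 / 2 - C * (a / (a - c)) * δ ^ (a - 2 * c)) * spectralMass μ R := by
        gcongr
        · exact spectralMass_nonneg μ R
        · linarith
    _ ≤ b * (spectralMass μ (δ⁻¹ ^ 2 * R) - spectralMass μ R) :=
        mul_spectralMass_le_of_dist_ne hdecay hC.le hlower ha (by linarith) hE hδ hδ1 R_pos growth
          hdist

theorem statement9_general (hV : 2 ≤ Module.finrank ℝ V)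
    (hc : c < ((Module.finrank ℝ V : ℝ) - 1) / 4) (hT₀ : 0 < T₀) :
    ∃ δ₀, 0 < δ₀ ∧ ∀ (μ : Measure V) [IsFiniteMeasure μ] (E : Set V), μ Eᶜ = 0 →
      (∀ T₁ T₂ : ℝ, T₀ ≤ T₁ → T₀ ≤ T₂ →
        spectralMass μ (T₁ * T₂) ≤ T₁ ^ c * spectralMass μ T₂) →
      ∀ δ, 0 < δ → δ < δ₀ → ∀ J : ℕ, 1 ≤ J → ∀ R : ℕ → ℝ,
        (∀ j < J, T₀ < R j) →
        (∀ j : ℕ, j + 1 < J → δ⁻¹ ^ 2 * R j ≤ R (j + 1)) →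
        1 / 2 * spectralMass μ (δ⁻¹ ^ 2 * R (J - 1)) <
          ∑ j ∈ Finset.range J, spectralMass μ (R j) →
        ∃ j < J, ∃ x ∈ E, ∃ y ∈ E, dist x y = δ * (R j)⁻¹ := by
  obtain ⟨δ₀, hδ₀, single_scale⟩ := exists_pos_forall_two_mul_spectralMass_le hV hc hT₀
  refine ⟨δ₀, hδ₀, fun μ _ E hE hgrowth δ hδ hδ_lt J hJ R hR hsep hsum => ?_⟩
  obtain ⟨n, rfl⟩ : ∃ n, J = n + 1 := ⟨J - 1, by omega⟩
  rw [Nat.add_sub_cancel] at hsum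
  by_contra! hdist
  have telescope := sum_range_sub_le_of_le_succ (F := fun j => spectralMass μ (R j))
    (G := fun j => spectralMass μ (δ⁻¹ ^ 2 * R j)) (n := n) (spectralMass_nonneg μ _)
    fun j hj => monotone_spectralMass μ (hsep j (by omega))
  have two_mul_sum_le : 2 * ∑ j ∈ Finset.range (n + 1), spectralMass μ (R j) ≤
      ∑ j ∈ Finset.range (n + 1), (spectralMass μ (δ⁻¹ ^ 2 * R j) - spectralMass μ (R j)) := by
    rw [Finset.mul_sum]
    refine Finset.sum_le_sum fun j hj => ?_
    have j_lt := Finset.mem_range.1 hj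
    exact single_scale μ E hE hgrowth δ hδ hδ_lt (R j) (hR j j_lt) (hdist j j_lt)
  linarith

end SumOverScales

lemma fourierM_eq_charFun_neg {d : ℕ} (μ : Measure (Euc d)) (ξ : Euc d) :
    fourierM μ ξ = charFun μ (-ξ) := by
  rw [fourierM, charFun_apply]
  refine integral_congr_ae (.of_forall fun x => ?_)
  simp [mul_comm]

lemma FmuInt_eq_spectralMass {d : ℕ} (μ : Measure (Euc d)) (T : ℝ) :
    FmuInt μ T = spectralMass μ T := by
  have ball_eq : {ξ : Euc d | ‖ξ‖ ≤ T} = closedBall 0 T := by ext; simp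
  simp only [FmuInt, spectralMass, powerSpectrum, fourierM_eq_charFun_neg, charFun_neg,
    RCLike.norm_conj, ball_eq]

/-- Theorem 1.11: given `c ∈ (0,(d-1)/4)`, `T₀ ≥ 1`, `M ≥ 4`, there is `δ_M > 0` such
that for any probability measure `μ` supported on `E ⊆ [0,1]^d` with
`F_μ(T₁T₂) ≤ T₁^c F_μ(T₂)` for `T₁,T₂ ≥ T₀`: if `δ ∈ (0,δ_M)` and
`R_1,…,R_J ∈ (T₀,∞)` satisfy `R_{j+1} ≥ δ^{-2} R_j` and
`∑_j F_μ(R_j) > (1 - 2/M) F_μ(δ^{-2} R_J)`, then some `δ R_j⁻¹` lies in `Δ(E)`. -/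
theorem statement9 (d : ℕ) (hd : 2 ≤ d) (c T₀ M : ℝ)
    (hc0 : 0 < c) (hc : c < ((d : ℝ) - 1) / 4) (hT₀ : 1 ≤ T₀) (hM : 4 ≤ M) :
    ∃ δM : ℝ, 0 < δM ∧
      ∀ μ : Measure (Euc d), IsProbabilityMeasure μ →
      ∀ E : Set (Euc d), E ⊆ unitCube d → μ Eᶜ = 0 →
      (∀ T₁ T₂ : ℝ, T₀ ≤ T₁ → T₀ ≤ T₂ → FmuInt μ (T₁ * T₂) ≤ T₁ ^ c * FmuInt μ T₂) →
      ∀ δ : ℝ, 0 < δ → δ < δM →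
      ∀ J : ℕ, 1 ≤ J → ∀ R : ℕ → ℝ,
        (∀ j < J, T₀ < R j) →
        (∀ j : ℕ, j + 1 < J → δ⁻¹ ^ 2 * R j ≤ R (j+1)) →
        (1 - 2/M) * FmuInt μ (δ⁻¹ ^ 2 * R (J-1)) < ∑ j ∈ Finset.range J, FmuInt μ (R j) →
        ∃ j < J, δ * (R j)⁻¹ ∈ distSet E E := by
  obtain ⟨δ₀, hδ₀, general⟩ := statement9_general (V := Euc d) (c := c) (T₀ := T₀) (by simpa)
    (by simpa) (by linarith)
  have half_le : 1 / 2 ≤ 1 - 2 / M := by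
    have : 2 / M ≤ 2 / 4 := by gcongr
    linarith
  simp only [FmuInt_eq_spectralMass]
  exact ⟨δ₀, hδ₀, fun μ _ E _ hE hgrowth δ hδ hδ_lt J hJ R hR hsep hsum =>
    general μ E hE hgrowth δ hδ hδ_lt J hJ R hR hsep <|
      (mul_le_mul_of_nonneg_right half_le (spectralMass_nonneg μ _)).trans_lt hsum⟩
end
end

section
/- There exists a constant c_0 > 0, depending only on the dimension d ≥ 2, with the following property. Let σ ∈ (1, 3/2) and let q be an integer such that c_0 q^{σ−1} exceeds a fixed dimensional constant. Then the distance set of F[q;σ] contains the interval [c_0^{−2} q^{2σ−3}, 1], i.e. Δ(F[q;σ]) ⊇ [c_0^{−2} q^{2σ−3}, 1]. -/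
open MeasureTheory Set Metric Filter
open scoped ENNReal NNReal Topology

noncomputable section

/-- The building block set `F[q;σ] = ⋃_{p ∈ ℤ_q^d} (p/q + q^{-σ}[0,1]^d)`. -/
def Fqs (d q : ℕ) (σ : ℝ) : Set (Euc d) :=
  {x | ∃ p : Fin d → ℕ, (∀ i, p i < q) ∧
    ∀ i, (p i : ℝ) / q ≤ x i ∧ x i ≤ (p i : ℝ) / q + (q : ℝ) ^ (-σ)}

/-!
All distances are measured from the origin to points of a coordinate plane. At scale
`T = tq`, let `a` be the largest integer below `T` and `b` the largest integer with
`a² + b² ≤ T²`. Then `T² < a² + (b + 1)²`, while `b² ≤ T² - a² ≤ 2T`, so the gap `2b + 1` is only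
`O(√T)`. Moving `a` by `δ = q^{1-σ}` increases `a² + b²` by at least `2aδ`, of order `Tδ`, which
closes the gap once `Tδ²` exceeds a constant, that is, once `t` exceeds a constant times
`q^{2σ-3}`.
-/

theorem exists_nat_sq_add_sq_le_lt {T : ℝ} (hT : 0 < T) :
    ∃ a b : ℕ, (a : ℝ) < T ∧ T ≤ a + 1 ∧
      (a : ℝ) ^ 2 + b ^ 2 ≤ T ^ 2 ∧ T ^ 2 < (a : ℝ) ^ 2 + (b + 1) ^ 2 := by
  obtain ⟨a, ha⟩ : ∃ a, ⌈T⌉₊ = a + 1 :=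
    Nat.exists_eq_succ_of_ne_zero (Nat.ceil_pos.2 hT).ne'
  have haT : (a : ℝ) < T := Nat.lt_ceil.1 (by lia)
  have hTa : T ≤ a + 1 := by simpa [ha] using Nat.le_ceil T
  have hgap : 0 ≤ T ^ 2 - (a : ℝ) ^ 2 := sub_nonneg.2 (by gcongr)
  refine ⟨a, ⌊√(T ^ 2 - (a : ℝ) ^ 2)⌋₊, haT, hTa, ?_, ?_⟩
  · exact le_sub_iff_add_le'.1 <|
      (Real.le_sqrt (Nat.cast_nonneg _) hgap).1 (Nat.floor_le (Real.sqrt_nonneg _))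
  · exact sub_lt_iff_lt_add'.1 <| (Real.sqrt_lt' (by positivity)).1 (Nat.lt_floor_add_one _)

theorem sq_le_add_sq_add_sq_of_le_mul_sq {T a b δ : ℝ} (hT : 4 ≤ T) (hδ : 0 ≤ δ)
    (hTδ : 16 ≤ T * δ ^ 2) (hTa : T ≤ a + 1) (hle : a ^ 2 + b ^ 2 ≤ T ^ 2)
    (hlt : T ^ 2 ≤ a ^ 2 + (b + 1) ^ 2) :
    T ^ 2 ≤ (a + δ) ^ 2 + b ^ 2 := by
  have ha : 3 / 4 * T ≤ a := by linarith
  have ha0 : 0 ≤ a := by linarith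
  have hb : b ^ 2 ≤ 2 * T := by nlinarith
  have hgap : 2 * b + 1 ≤ 2 * a * δ := by
    refine le_of_abs_le (abs_le_of_sq_le_sq ?_ (by positivity))
    calc (2 * b + 1) ^ 2 ≤ 8 * b ^ 2 + 2 := by linarith [sq_nonneg (2 * b - 1)]
      _ ≤ 18 * T := by linarith
      _ ≤ 9 / 4 * T * 16 := by linarith
      _ ≤ 9 / 4 * T * (T * δ ^ 2) := by gcongr
      _ = (2 * (3 / 4 * T) * δ) ^ 2 := by ring
      _ ≤ (2 * a * δ) ^ 2 := by gcongr
  calc T ^ 2 ≤ a ^ 2 + (b + 1) ^ 2 := hlt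
    _ = a ^ 2 + (2 * b + 1) + b ^ 2 := by ring
    _ ≤ a ^ 2 + 2 * a * δ + b ^ 2 := by gcongr
    _ ≤ (a + δ) ^ 2 + b ^ 2 := by linarith [sq_nonneg δ]

theorem exists_mem_Icc_sq_add_sq_eq {T δ : ℝ} (hδ : 0 ≤ δ) (hδ1 : δ ≤ 1)
    (hTδ : 16 ≤ T * δ ^ 2) :
    ∃ a b : ℕ, (a : ℝ) < T ∧ (b : ℝ) < T ∧ ∃ x ∈ Icc (a : ℝ) (a + δ), x ^ 2 + b ^ 2 = T ^ 2 := by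
  have hT0 : 0 < T := pos_of_mul_pos_left (by linarith) (sq_nonneg δ)
  have hT : 16 ≤ T := hTδ.trans (mul_le_of_le_one_right hT0.le (pow_le_one₀ hδ hδ1))
  obtain ⟨a, b, haT, hTa, hle, hlt⟩ := exists_nat_sq_add_sq_le_lt hT0
  have hbT : (b : ℝ) < T := by nlinarith
  have hle' : T ^ 2 ≤ (a + δ) ^ 2 + (b : ℝ) ^ 2 :=
    sq_le_add_sq_add_sq_of_le_mul_sq (by linarith) hδ hTδ hTa hle hlt.le
  refine ⟨a, b, haT, hbT, √(T ^ 2 - (b : ℝ) ^ 2), ⟨?_, ?_⟩, ?_⟩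
  · exact Real.le_sqrt_of_sq_le (by linarith)
  · exact Real.sqrt_le_iff.2 ⟨by positivity, by linarith⟩
  · rw [Real.sq_sqrt (by nlinarith), sub_add_cancel]

/-- The `ε`-thickening to the right of the grid `{0, 1/q, …, (q-1)/q}`. For `ε = q^{-σ}` it is the
one-dimensional factor of the product set `F[q;σ]`. -/
def thickenedGrid (q : ℕ) (ε : ℝ) : Set ℝ :=
  {u | ∃ p < q, u ∈ Icc ((p : ℝ) / q) ((p : ℝ) / q + ε)}

theorem natCast_div_mem_thickenedGrid {p q : ℕ} {ε : ℝ} (hp : p < q) (hε : 0 ≤ ε) :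
    (p : ℝ) / q ∈ thickenedGrid q ε :=
  ⟨p, hp, le_rfl, le_add_of_nonneg_right hε⟩

theorem zero_mem_thickenedGrid {q : ℕ} {ε : ℝ} (hq : 0 < q) (hε : 0 ≤ ε) :
    0 ∈ thickenedGrid q ε := by
  simpa using natCast_div_mem_thickenedGrid hq hε

theorem exists_thickenedGrid_sq_add_sq_eq {q : ℕ} {t δ : ℝ} (hδ : 0 ≤ δ) (hδ1 : δ ≤ 1)
    (ht : 16 ≤ t * q * δ ^ 2) (ht1 : t ≤ 1) :
    ∃ u ∈ thickenedGrid q (δ / q), ∃ v ∈ thickenedGrid q (δ / q), u ^ 2 + v ^ 2 = t ^ 2 := by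
  obtain ⟨a, b, haT, hbT, x, ⟨hax, hxa⟩, hx⟩ := exists_mem_Icc_sq_add_sq_eq hδ hδ1 ht
  have htq : t * q ≤ q := mul_le_of_le_one_left (Nat.cast_nonneg q) ht1
  have haq : a < q := mod_cast haT.trans_le htq
  have hbq : b < q := mod_cast hbT.trans_le htq
  have hq : (q : ℝ) ≠ 0 := Nat.cast_ne_zero.2 (by lia)
  refine ⟨x / q, ⟨a, haq, by gcongr, ?_⟩, b / q,
    natCast_div_mem_thickenedGrid hbq (by positivity), ?_⟩
  · rw [← add_div]
    gcongr
  · rw [div_pow, div_pow, ← add_div, hx, mul_pow, mul_div_cancel_right₀ _ (pow_ne_zero 2 hq)]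

theorem mem_Fqs_iff {d q : ℕ} {σ : ℝ} {x : Euc d} :
    x ∈ Fqs d q σ ↔ ∀ i, x i ∈ thickenedGrid q ((q : ℝ) ^ (-σ)) := by
  simp only [Fqs, thickenedGrid, mem_ofPred_eq, mem_Icc, Classical.skolem, forall_and]

theorem norm_single_add_single {ι : Type*} [Fintype ι] [DecidableEq ι] {i j : ι} (hij : i ≠ j)
    (u v : ℝ) :
    ‖EuclideanSpace.single i u + EuclideanSpace.single j v‖ = √(u ^ 2 + v ^ 2) := by
  have horth : inner ℝ (EuclideanSpace.single i u) (EuclideanSpace.single j v) = 0 := by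
    simp [EuclideanSpace.inner_single_left, hij]
  rw [← Real.sqrt_sq (norm_nonneg _), sq, norm_add_sq_eq_norm_sq_add_norm_sq_real horth]
  simp [sq]

theorem sqrt_sq_add_sq_mem_distSet_Fqs {d q : ℕ} {σ u v : ℝ} (hd : 2 ≤ d) (hq : 0 < q)
    (hu : u ∈ thickenedGrid q ((q : ℝ) ^ (-σ))) (hv : v ∈ thickenedGrid q ((q : ℝ) ^ (-σ))) :
    √(u ^ 2 + v ^ 2) ∈ distSet (Fqs d q σ) (Fqs d q σ) := by
  have hzero : 0 ∈ thickenedGrid q ((q : ℝ) ^ (-σ)) := zero_mem_thickenedGrid hq (by positivity)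
  have : Nontrivial (Fin d) := Fin.nontrivial_iff_two_le.2 hd
  obtain ⟨i, j, hij⟩ := exists_pair_ne (Fin d)
  refine ⟨EuclideanSpace.single i u + EuclideanSpace.single j v, mem_Fqs_iff.2 fun k => ?_,
    0, mem_Fqs_iff.2 fun _ => hzero, ?_⟩
  · by_cases hki : k = i
    · simpa [hki, hij] using hu
    · by_cases hkj : k = j
      · simpa [hkj, hij.symm] using hv
      · simpa [hki, hkj] using hzero
  · rw [dist_zero_right, norm_single_add_single hij]

theorem Icc_subset_distSet_Fqs {d q : ℕ} {σ : ℝ} (hd : 2 ≤ d) (hq : 0 < q) (hσ : 1 ≤ σ) :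
    Icc (16 * (q : ℝ) ^ (2 * σ - 3)) 1 ⊆ distSet (Fqs d q σ) (Fqs d q σ) := by
  rintro t ⟨ht, ht1⟩
  have hq0 : (0 : ℝ) < q := Nat.cast_pos.2 hq
  have hδ1 : (q : ℝ) ^ (1 - σ) ≤ 1 :=
    Real.rpow_le_one_of_one_le_of_nonpos (Nat.one_le_cast.2 hq) (by linarith)
  have hside : (q : ℝ) ^ (1 - σ) / q = (q : ℝ) ^ (-σ) := by
    rw [← Real.rpow_sub_one hq0.ne', sub_sub_cancel_left]
  have hcancel : (q : ℝ) ^ (2 * σ - 3) * q * ((q : ℝ) ^ (1 - σ)) ^ 2 = 1 := by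
    rw [← Real.rpow_add_one hq0.ne', ← Real.rpow_mul_natCast hq0.le, ← Real.rpow_add hq0]
    ring_nf
    exact Real.rpow_zero _
  have hscale : 16 ≤ t * q * ((q : ℝ) ^ (1 - σ)) ^ 2 :=
    calc (16 : ℝ) = 16 * (q : ℝ) ^ (2 * σ - 3) * q * ((q : ℝ) ^ (1 - σ)) ^ 2 := by
          linear_combination -16 * hcancel
      _ ≤ t * q * ((q : ℝ) ^ (1 - σ)) ^ 2 := by gcongr
  obtain ⟨u, hu, v, hv, huv⟩ :=
    exists_thickenedGrid_sq_add_sq_eq (by positivity) hδ1 hscale ht1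
  rw [hside] at hu hv
  have ht0 : 0 ≤ t := le_trans (by positivity) ht
  rw [← Real.sqrt_sq ht0, ← huv]
  exact sqrt_sq_add_sq_mem_distSet_Fqs hd hq hu hv

/-- Lemma 2.1 (c): there is a constant `c₀ > 0` depending only on `d ≥ 2` (and a fixed
dimensional constant `C`) such that for `σ ∈ (1,3/2)` and integers `q` with
`c₀ q^{σ-1} ≥ C`, the distance set of `F[q;σ]` contains `[c₀^{-2} q^{2σ-3}, 1]`. -/
theorem statement12 (d : ℕ) (hd : 2 ≤ d) :
    ∃ c₀ C : ℝ, 0 < c₀ ∧ 0 < C ∧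
      ∀ σ : ℝ, 1 < σ → σ < 3/2 → ∀ q : ℕ, C ≤ c₀ * (q : ℝ) ^ (σ - 1) →
        Icc ((1 / c₀ ^ 2) * (q : ℝ) ^ (2 * σ - 3)) 1 ⊆ distSet (Fqs d q σ) (Fqs d q σ) := by
  refine ⟨1 / 4, 1, by norm_num, by norm_num, fun σ hσ _ q hq => ?_⟩
  have hq0 : 0 < q := by
    refine Nat.pos_of_ne_zero ?_
    rintro rfl
    norm_num [Real.zero_rpow (sub_pos.2 hσ).ne'] at hq
  convert Icc_subset_distSet_Fqs hd hq0 hσ.le using 3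
  norm_num
end
end
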